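/- arXiv:1504.01148 — 3 statements merged into one kernel-verified Lean document; each statement's English description precedes it below -/
import Mathlib

section
/- Let R be a commutative Noetherian ring with unity, I an ideal of R, and M an R-module with cohomological dimension cd(I,M) = c > 0. Then there exists a descending chain of ideals I = I_c ⊋ I_{c-1} ⊋ ⋯ ⊋ I_0 of R such that cd(I_i, M) = i for every i with 0 ≤ i ≤ c. -/
universe u

open CategoryTheory

/-- The cohomological dimension of `M` with respect to `I`:
`cd(I,M) = sup { i ∈ ℕ | H^i_I(M) ≠ 0 }`, as an element of `ℕ∞`. -/
noncomputable def cohomologicalDimension {R : Type u} [CommRing R] (I : Ideal R)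
    (M : ModuleCat.{u} R) : ℕ∞ :=
  sSup {c : ℕ∞ | ∃ i : ℕ, c = i ∧ Nontrivial ((localCohomology I i).obj M)}

universe v w

open Opposite

section
variable {R : Type u} [CommRing R]

/-- The morphism `R ⧸ J ⟶ R ⧸ K` induced by multiplication by `a`. -/
noncomputable def Ideal.quotientMulHom (a : R) {J K : Ideal R} (h : ∀ r ∈ J, a * r ∈ K) :
    ModuleCat.of R (R ⧸ J) ⟶ ModuleCat.of R (R ⧸ K) :=
  ModuleCat.ofHom (Submodule.mapQ J K (LinearMap.mulLeft R a) h)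

/-- The projection `R ⧸ J ⟶ R ⧸ K` for `J ≤ K`. -/
noncomputable def Ideal.quotientProj {J K : Ideal R} (h : J ≤ K) :
    ModuleCat.of R (R ⧸ J) ⟶ ModuleCat.of R (R ⧸ K) :=
  ModuleCat.ofHom (Submodule.mapQ J K LinearMap.id h)

lemma Ideal.quotientProj_comp {J K L : Ideal R} (h : J ≤ K) (h' : K ≤ L) :
    Ideal.quotientProj h ≫ Ideal.quotientProj h' = Ideal.quotientProj (h.trans h') := by
  refine ModuleCat.hom_ext (LinearMap.ext fun x ↦ ?_)
  obtain ⟨x, rfl⟩ := Submodule.Quotient.mk_surjective _ x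
  rfl

lemma Ideal.quotientMulHom_comp_proj (a : R) {J K L : Ideal R} (h : ∀ r ∈ J, a * r ∈ K)
    (h' : K ≤ L) :
    Ideal.quotientMulHom a h ≫ Ideal.quotientProj h' =
      Ideal.quotientMulHom a (fun r hr ↦ h' (h r hr)) := by
  refine ModuleCat.hom_ext (LinearMap.ext fun x ↦ ?_)
  obtain ⟨x, rfl⟩ := Submodule.Quotient.mk_surjective _ x
  rfl

/-- The ideal of all `r` with `a * r ∈ J`. -/
def Ideal.colonElem (J : Ideal R) (a : R) : Ideal R :=
  Submodule.comap (LinearMap.mulLeft R a) J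

/-- The sequence `0 ⟶ R ⧸ (J : a) ⟶ R ⧸ J ⟶ R ⧸ (J + (a)) ⟶ 0`. -/
noncomputable def Ideal.colonShortComplex (J : Ideal R) (a : R) :
    ShortComplex (ModuleCat.{u} R) :=
  ShortComplex.mk (Ideal.quotientMulHom a (J := J.colonElem a) (K := J) (fun _ hr ↦ hr))
    (Ideal.quotientProj (le_sup_left : J ≤ J ⊔ Ideal.span {a})) (by
      refine ModuleCat.hom_ext (LinearMap.ext fun x ↦ ?_)
      obtain ⟨x, rfl⟩ := Submodule.Quotient.mk_surjective _ x
      refine (Submodule.Quotient.mk_eq_zero _).2 ?_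
      exact Ideal.mul_mem_right _ _ (le_sup_right (a := J) (Ideal.mem_span_singleton_self a)))

lemma Ideal.colonShortComplex_shortExact (J : Ideal R) (a : R) :
    (J.colonShortComplex a).ShortExact := by
  apply ModuleCat.shortComplex_shortExact
  · intro y
    obtain ⟨y, rfl⟩ := Submodule.Quotient.mk_surjective _ y
    constructor
    · intro hy
      replace hy : y ∈ J ⊔ Ideal.span {a} := (Submodule.Quotient.mk_eq_zero _).1 hy
      obtain ⟨j, hj, z, hz, rfl⟩ := Submodule.mem_sup.1 hy
      obtain ⟨r, rfl⟩ := Ideal.mem_span_singleton.1 hz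
      refine ⟨Submodule.Quotient.mk r, ?_⟩
      refine (Submodule.Quotient.eq _).2 ?_
      change a * r - (j + a * r) ∈ J
      simpa using hj
    · rintro ⟨x, hx⟩
      obtain ⟨x, rfl⟩ := Submodule.Quotient.mk_surjective _ x
      replace hx := (Submodule.Quotient.eq _).1 hx
      refine (Submodule.Quotient.mk_eq_zero _).2 ?_
      have h1 : a * x ∈ J ⊔ Ideal.span {a} :=
        Ideal.mul_mem_right _ _ (le_sup_right (a := J) (Ideal.mem_span_singleton_self a))
      have h2 : a * x - y ∈ J ⊔ Ideal.span {a} := le_sup_left (a := J) hx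
      simpa using Ideal.sub_mem _ h1 h2
  · intro x y hxy
    obtain ⟨x, rfl⟩ := Submodule.Quotient.mk_surjective _ x
    obtain ⟨y, rfl⟩ := Submodule.Quotient.mk_surjective _ y
    replace hxy : a * x - a * y ∈ J := (Submodule.Quotient.eq _).1 hxy
    refine (Submodule.Quotient.eq _).2 ?_
    change a * (x - y) ∈ J
    rwa [mul_sub]
  · intro y
    obtain ⟨y, rfl⟩ := Submodule.Quotient.mk_surjective _ y
    exact ⟨Submodule.Quotient.mk y, rfl⟩

open Abelian

/-- Every class in `Ext^i(R ⧸ J, M)`, where `J` contains a power of `I`, becomes zero when pulled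
back to some `R ⧸ I ^ m`. For `0 < i` this says that `H^i_I(M) = 0`. -/
def Ideal.ExtVanishes (I : Ideal R) (M : ModuleCat.{u} R) (i : ℕ) : Prop :=
  ∀ (J : Ideal R) (n : ℕ), I ^ n ≤ J → ∀ e : Ext (ModuleCat.of R (R ⧸ J)) M i,
    ∃ (m : ℕ) (h : I ^ m ≤ J), (Ext.mk₀ (Ideal.quotientProj h)).comp e (zero_add i) = 0

lemma CategoryTheory.Abelian.Ext.mk₀_comp_comp_eq_zero {C : Type*} [Category* C] [Abelian C]
    [HasExt C] {X Y Z M : C} {i : ℕ} (f : X ⟶ Y) (g : Y ⟶ Z) {e : Ext Z M i}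
    (he : (Ext.mk₀ g).comp e (zero_add i) = 0) :
    (Ext.mk₀ (f ≫ g)).comp e (zero_add i) = 0 := by
  rw [← Ext.mk₀_comp_mk₀_assoc, he, Ext.comp_zero]

lemma Ideal.mk₀_quotientProj_comp_eq_zero_of_le {M : ModuleCat.{u} R} {i : ℕ} {J K L : Ideal R}
    (hLK : L ≤ K) (hKJ : K ≤ J) {e : Ext (ModuleCat.of R (R ⧸ J)) M i}
    (he : (Ext.mk₀ (Ideal.quotientProj hKJ)).comp e (zero_add i) = 0) :
    (Ext.mk₀ (Ideal.quotientProj (hLK.trans hKJ))).comp e (zero_add i) = 0 := by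
  rw [← Ideal.quotientProj_comp hLK hKJ]
  exact Ext.mk₀_comp_comp_eq_zero _ _ he

lemma Ideal.exists_pow_mul_mem_of_pow_mul_mem [IsNoetherianRing R] (J : Ideal R) (x : R) :
    ∃ k : ℕ, ∀ l r, x ^ l * r ∈ J → x ^ k * r ∈ J := by
  let f : ℕ →o Ideal R :=
    { toFun := fun k ↦ J.colonElem (x ^ k)
      monotone' := fun a b hab r (hr : x ^ a * r ∈ J) ↦ by
        change x ^ b * r ∈ J
        obtain ⟨c, rfl⟩ := Nat.exists_eq_add_of_le' hab
        rw [pow_add, mul_assoc]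
        exact J.mul_mem_left _ hr }
  obtain ⟨k, hk⟩ := monotone_stabilizes_iff_noetherian.2 (inferInstance : IsNoetherian R R) f
  refine ⟨k, fun l r hr ↦ ?_⟩
  have h1 : r ∈ f (max k l) := f.monotone (le_max_right k l) hr
  rwa [← hk _ (le_max_left k l)] at h1

/-- The morphism of short exact sequences `colonShortComplex` induced by `J' ≤ J` and
`a' = a * b`. -/
noncomputable def Ideal.colonShortComplexMap {J J' : Ideal R} (hJ : J' ≤ J) (a b : R) :
    J'.colonShortComplex (a * b) ⟶ J.colonShortComplex a where
  τ₁ := Ideal.quotientMulHom b (fun r hr ↦ by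
    change a * (b * r) ∈ J
    rw [← mul_assoc]
    exact hJ hr)
  τ₂ := Ideal.quotientProj hJ
  τ₃ := Ideal.quotientProj (sup_le_sup hJ
    ((Ideal.span_singleton_le_span_singleton).2 (Dvd.intro b rfl)))
  comm₁₂ := by
    refine ModuleCat.hom_ext (LinearMap.ext fun x ↦ ?_)
    obtain ⟨x, rfl⟩ := Submodule.Quotient.mk_surjective _ x
    refine congrArg (Submodule.Quotient.mk (p := J)) ?_
    exact (mul_assoc a b x).symm
  comm₂₃ := by
    refine ModuleCat.hom_ext (LinearMap.ext fun x ↦ ?_)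
    obtain ⟨x, rfl⟩ := Submodule.Quotient.mk_surjective _ x
    rfl

lemma Ideal.ExtVanishes.sup_span_singleton [IsNoetherianRing R] {I : Ideal R}
    {M : ModuleCat.{u} R} {i : ℕ} (h₀ : I.ExtVanishes M i) (h₁ : I.ExtVanishes M (i + 1)) (x : R) :
    (I ⊔ Ideal.span {x}).ExtVanishes M (i + 1) := by
  intro J n hJ e
  have hIJ : I ^ n ≤ J := (Ideal.pow_right_mono le_sup_left n).trans hJ
  have hxJ : x ^ n ∈ J :=
    hJ (Ideal.pow_mem_pow (le_sup_right (a := I) (Ideal.mem_span_singleton_self x)) n)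
  obtain ⟨p, hp, hpe⟩ := h₁ J n hIJ e
  have hJ₁ : I ^ p ⊔ Ideal.span {x ^ n} ≤ J :=
    sup_le hp ((Ideal.span_singleton_le_iff_mem J).2 hxJ)
  obtain ⟨f, hf⟩ := Ext.contravariant_sequence_exact₃
    ((I ^ p).colonShortComplex_shortExact (x ^ n)) M
    ((Ext.mk₀ (Ideal.quotientProj hJ₁)).comp e (zero_add _)) (by
      change (Ext.mk₀ (Ideal.quotientProj le_sup_left)).comp _ _ = 0
      rw [Ext.mk₀_comp_mk₀_assoc, Ideal.quotientProj_comp]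
      exact hpe) (add_comm 1 i)
  have hcolon : I ^ p ≤ (I ^ p).colonElem (x ^ n) := fun r hr ↦ Ideal.mul_mem_left _ _ hr
  obtain ⟨q, hq, hqf⟩ := h₀ _ p hcolon f
  have hqp : I ^ (q + p) ≤ I ^ p := Ideal.pow_le_pow_right (Nat.le_add_left p q)
  have hqq : I ^ (q + p) ≤ I ^ q := Ideal.pow_le_pow_right (Nat.le_add_right q p)
  obtain ⟨k, hk⟩ := (I ^ (q + p)).exists_pow_mul_mem_of_pow_mul_mem x
  have hk' : ∀ r ∈ (I ^ (q + p)).colonElem (x ^ n * x ^ k), x ^ k * r ∈ I ^ (q + p) := by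
    intro r hr
    refine hk (n + k) r ?_
    rw [pow_add x]
    exact hr
  let φ := Ideal.colonShortComplexMap hqp (x ^ n) (x ^ k)
  have hf₁ : (Ext.mk₀ φ.τ₁).comp f (zero_add i) = 0 := by
    have := Ext.mk₀_comp_comp_eq_zero (Ideal.quotientMulHom (x ^ k) hk') _
      (Ideal.mk₀_quotientProj_comp_eq_zero_of_le hqq hq hqf)
    rwa [Ideal.quotientMulHom_comp_proj] at this
  have hle : (I ⊔ Ideal.span {x}) ^ (q + p + (n + k)) ≤
      I ^ (q + p) ⊔ Ideal.span {x ^ n * x ^ k} := by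
    rw [← pow_add, ← Ideal.span_singleton_pow]
    exact Ideal.sup_pow_add_le_pow_sup_pow
  have hle' : I ^ (q + p) ⊔ Ideal.span {x ^ n * x ^ k} ≤ I ^ p ⊔ Ideal.span {x ^ n} :=
    sup_le_sup hqp ((Ideal.span_singleton_le_span_singleton).2 (Dvd.intro _ rfl))
  refine ⟨_, (hle.trans hle').trans hJ₁, ?_⟩
  rw [← Ideal.quotientProj_comp (hle.trans hle') hJ₁, ← Ext.mk₀_comp_mk₀_assoc]
  refine Ideal.mk₀_quotientProj_comp_eq_zero_of_le hle hle' ?_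
  rw [← hf]
  have := ShortComplex.ShortExact.extClass_naturality
    ((I ^ (q + p)).colonShortComplex_shortExact (x ^ n * x ^ k))
    ((I ^ p).colonShortComplex_shortExact (x ^ n)) φ
  change (Ext.mk₀ φ.τ₃).comp _ _ = 0
  rw [← Ext.comp_assoc _ _ _ (zero_add 1) (add_comm 1 i) (by omega), ← this,
    Ext.comp_assoc _ _ _ (add_zero 1) (zero_add i) (by omega), hf₁, Ext.comp_zero]

lemma Ideal.extVanishes_bot (M : ModuleCat.{u} R) (i : ℕ) :
    (⊥ : Ideal R).ExtVanishes M (i + 1) := by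
  intro J n hJ e
  refine ⟨1, by simp, ?_⟩
  have : Module.Projective R (R ⧸ (⊥ : Ideal R) ^ 1) :=
    Module.Projective.of_equiv (Submodule.quotEquivOfEqBot ((⊥ : Ideal R) ^ 1) (pow_one _)).symm
  have : Projective (ModuleCat.of R (R ⧸ (⊥ : Ideal R) ^ 1)) :=
    inferInstance
  exact Ext.eq_zero_of_projective _
end

section
variable {A : Type u} [Ring A]

/-- A homology class `z` is represented by `x` if both have the same image in the opcycles. -/
def CochainComplex.Represents {K : CochainComplex (ModuleCat.{v} A) ℕ} {n : ℕ} (z : K.homology n)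
    (x : K.X n) : Prop :=
  K.homologyι n z = K.pOpcycles n x

namespace CochainComplex.Represents

variable {K L : CochainComplex (ModuleCat.{v} A) ℕ} {n : ℕ}

lemma exists_cocycle (z : K.homology n) :
    ∃ x : K.X n, K.d n (n + 1) x = 0 ∧ Represents z x := by
  obtain ⟨x, hx⟩ := (ModuleCat.epi_iff_surjective (K.pOpcycles n)).1 inferInstance (K.homologyι n z)
  refine ⟨x, ?_, hx.symm⟩
  rw [← K.p_fromOpcycles n (n + 1), ConcreteCategory.comp_apply, hx, ← ConcreteCategory.comp_apply,
    K.homologyι_comp_fromOpcycles]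
  rfl

lemma exists_class (x : K.X n) (hx : K.d n (n + 1) x = 0) :
    ∃ z : K.homology n, Represents z x := by
  have hi := K.i_cyclesMk (i := n) x (n + 1) (by simp) hx
  refine ⟨K.homologyπ n (K.cyclesMk (i := n) x (n + 1) (by simp) hx), ?_⟩
  unfold Represents
  rw [← ConcreteCategory.comp_apply, K.homology_π_ι, ConcreteCategory.comp_apply]
  exact congrArg (K.pOpcycles n) hi

lemma eq_zero_iff {z : K.homology (n + 1)} {x : K.X (n + 1)} (h : Represents z x) :
    z = 0 ↔ ∃ y : K.X n, K.d n (n + 1) y = x := by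
  have h1 : z = 0 ↔ K.pOpcycles (n + 1) x = 0 := by
    rw [← h, map_eq_zero_iff]
    exact (ModuleCat.mono_iff_injective (K.homologyι (n + 1))).1 inferInstance
  rw [h1]
  refine ((K.sc (n + 1)).moduleCat_pOpcycles_eq_zero_iff x).trans ?_
  have : (ComplexShape.up ℕ).prev (n + 1) = n := by simp
  change (∃ y : K.X ((ComplexShape.up ℕ).prev (n + 1)), K.d _ (n + 1) y = x) ↔ _
  rw [this]

lemma map {z : K.homology n} {x : K.X n} (h : Represents z x) (φ : K ⟶ L) :
    Represents (HomologicalComplex.homologyMap φ n z) (φ.f n x) := by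
  unfold Represents at h ⊢
  rw [← ConcreteCategory.comp_apply, HomologicalComplex.homologyι_naturality,
    ConcreteCategory.comp_apply, h, ← ConcreteCategory.comp_apply, ← ConcreteCategory.comp_apply,
    HomologicalComplex.p_opcyclesMap]

end CochainComplex.Represents

variable {C : Type w} [Category.{v} C] [Abelian C] [Linear A C]

/-- Functoriality of `ChainComplex.linearYonedaObj` in the complex. -/
noncomputable def ChainComplex.linearYonedaObjMap (A : Type u) [Ring A] [Linear A C]
    {K L : ChainComplex C ℕ} (φ : K ⟶ L) (Y : C) :
    L.linearYonedaObj A Y ⟶ K.linearYonedaObj A Y :=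
  (HomologicalComplex.unopFunctor _ _).map
    ((((linearYoneda A C).obj Y).rightOp.mapHomologicalComplex _).map φ).op

lemma CategoryTheory.ProjectiveResolution.isoExt_hom_naturality [EnoughProjectives C]
    {X X' : C} {g : X' ⟶ X} {P : ProjectiveResolution X} {P' : ProjectiveResolution X'}
    (φ : P'.Hom P g) (n : ℕ) (Y : C) :
    ((Ext A C n).map g.op).app Y ≫ (P'.isoExt n Y).hom =
      (P.isoExt n Y).hom ≫
        HomologicalComplex.homologyMap (ChainComplex.linearYonedaObjMap A φ.hom Y) n := by
  have h1 := P'.isoLeftDerivedObj_inv_naturality g P φ.hom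
    (φ.hom_f_zero_comp_π_f_zero.trans (by simp)) ((linearYoneda A C).obj Y).rightOp n
  have h2 := HomologicalComplex.homologyOp_hom_naturality
    (ChainComplex.linearYonedaObjMap A φ.hom Y) n
  have h1' : ((Ext A C n).map g.op).app Y ≫ (P'.isoLeftDerivedObj _ n).inv.unop =
      (P.isoLeftDerivedObj _ n).inv.unop ≫ _ := congrArg Quiver.Hom.unop h1
  have h2' := congrArg Quiver.Hom.unop ((Iso.inv_comp_eq _).2
    (((Iso.eq_comp_inv _).2 h2).trans (Category.assoc _ _ _)))
  have hP : (P.isoExt n Y).hom =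
      (P.isoLeftDerivedObj ((linearYoneda A C).obj Y).rightOp n).inv.unop ≫
      ((P.complex.linearYonedaObj A Y).homologyOp n).inv.unop := rfl
  have hP' : (P'.isoExt n Y).hom =
      (P'.isoLeftDerivedObj ((linearYoneda A C).obj Y).rightOp n).inv.unop ≫
      ((P'.complex.linearYonedaObj A Y).homologyOp n).inv.unop := rfl
  rw [hP, hP']
  refine (Category.assoc _ _ _).symm.trans ((congrArg (· ≫ _) h1').trans ?_)
  refine (Category.assoc _ _ _).trans (Eq.trans ?_ (Category.assoc _ _ _).symm)
  exact congrArg ((P.isoLeftDerivedObj ((linearYoneda A C).obj Y).rightOp n).inv.unop ≫ ·) h2'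

end

namespace CategoryTheory.ProjectiveResolution

variable {A : Type u} [Ring A] {C : Type w} [Category.{v} C] [Abelian C] [Linear A C]

lemma nonempty_hom {X X' : C} (g : X' ⟶ X) (P' : ProjectiveResolution X')
    (P : ProjectiveResolution X) : Nonempty (P'.Hom P g) :=
  ⟨⟨lift g P' P, (lift_commutes_zero g P' P).trans (by simp)⟩⟩

variable [EnoughProjectives C] [HasExt.{v} C]

lemma ext_map_eq_zero_iff_of_represents {X X' Y : C} {n : ℕ} (P : ProjectiveResolution X)
    {x : ((Ext A C (n + 1)).obj (op X)).obj Y} {f : P.complex.X (n + 1) ⟶ Y}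
    (hf : P.complex.d (n + 2) (n + 1) ≫ f = 0)
    (h : CochainComplex.Represents (K := P.complex.linearYonedaObj A Y)
      ((P.isoExt (n + 1) Y).hom x) f) (g : X' ⟶ X) :
    ((Ext A C (n + 1)).map g.op).app Y x = 0 ↔
      (Abelian.Ext.mk₀ g).comp (P.extMk f (n + 2) rfl hf) (zero_add _) = 0 := by
  let P' := projectiveResolution X'
  obtain ⟨φ⟩ := nonempty_hom g P' P
  rw [mk₀_comp_extMk f (n + 2) rfl hf φ, P'.extMk_eq_zero_iff _ _ _ _ n rfl]
  refine Iff.trans ?_ (h.map (ChainComplex.linearYonedaObjMap A φ.hom Y)).eq_zero_iff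
  rw [← ConcreteCategory.comp_apply, ← isoExt_hom_naturality φ, ConcreteCategory.comp_apply]
  exact (P'.isoExt (R := A) (n + 1) Y).toLinearEquiv.map_eq_zero_iff.symm

/-- Every class in `Ext A C (n + 1)` has a counterpart in `Abelian.Ext` killed by the same
morphisms. -/
lemma exists_abelianExt_forall_map_eq_zero_iff {X Y : C} {n : ℕ}
    (x : ((Ext A C (n + 1)).obj (op X)).obj Y) :
    ∃ e : Abelian.Ext X Y (n + 1), ∀ {X' : C} (g : X' ⟶ X),
      ((Ext A C (n + 1)).map g.op).app Y x = 0 ↔ (Abelian.Ext.mk₀ g).comp e (zero_add _) = 0 := by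
  let P := projectiveResolution X
  obtain ⟨f, hf, h⟩ := CochainComplex.Represents.exists_cocycle ((P.isoExt (n + 1) Y).hom x)
  exact ⟨P.extMk f (n + 2) rfl hf, fun g ↦ P.ext_map_eq_zero_iff_of_represents hf h g⟩

/-- Every class in `Abelian.Ext` of positive degree has a counterpart in `Ext A C (n + 1)` killed
by the same morphisms. -/
lemma exists_ext_forall_map_eq_zero_iff {X Y : C} {n : ℕ} (e : Abelian.Ext X Y (n + 1)) :
    ∃ x : ((Ext A C (n + 1)).obj (op X)).obj Y, ∀ {X' : C} (g : X' ⟶ X),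
      ((Ext A C (n + 1)).map g.op).app Y x = 0 ↔ (Abelian.Ext.mk₀ g).comp e (zero_add _) = 0 := by
  let P := projectiveResolution X
  obtain ⟨f, hf, rfl⟩ := P.extMk_surjective e (n + 2) rfl
  obtain ⟨z, hz⟩ := CochainComplex.Represents.exists_class (K := P.complex.linearYonedaObj A Y) f hf
  refine ⟨(P.isoExt (n + 1) Y).inv z, fun g ↦ P.ext_map_eq_zero_iff_of_represents hf ?_ g⟩
  rwa [← ConcreteCategory.comp_apply, Iso.inv_hom_id]

end CategoryTheory.ProjectiveResolution

section
open Limits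

lemma ModuleCat.subsingleton_iff_of_isColimit {A : Type u} [Ring A] {J : Type*} [Category* J]
    [IsFiltered J] {F : J ⥤ ModuleCat.{v} A} [PreservesColimit F (forget (ModuleCat.{v} A))]
    {c : Cocone F} (hc : IsColimit c) :
    Subsingleton c.pt ↔ ∀ (j : J) (x : F.obj j), ∃ (k : J) (f : j ⟶ k), F.map f x = 0 := by
  constructor
  · intro _ j x
    obtain ⟨k, f, g, hfg⟩ := Concrete.isColimit_exists_of_rep_eq F hc x (0 : F.obj j)
      (Subsingleton.elim (α := c.pt) _ _)
    exact ⟨k, f, by rw [hfg, map_zero]⟩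
  · intro h
    refine subsingleton_of_forall_eq 0 fun z ↦ ?_
    obtain ⟨j, x, rfl⟩ := Concrete.isColimit_exists_rep F hc z
    obtain ⟨k, f, hf⟩ := h j x
    rw [← c.w f, ConcreteCategory.comp_apply, hf, map_zero]

variable {R : Type u} [CommRing R]

lemma localCohomology.subsingleton_iff (I : Ideal R) (i : ℕ) (M : ModuleCat.{u} R) :
    Subsingleton ((localCohomology I i).obj M) ↔
      ∀ (n : ℕ) (x : ((Ext R (ModuleCat.{u} R) i).obj (op (ModuleCat.of R (R ⧸ I ^ n)))).obj M),
        ∃ (m : ℕ) (h : n ≤ m), ((Ext R (ModuleCat.{u} R) i).map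
          (Ideal.quotientProj (Ideal.pow_le_pow_right (I := I) h)).op).app M x = 0 := by
  have := localCohomology.hasColimitDiagram.{u, 0} (localCohomology.idealPowersDiagram I) i
  have hc := isColimitOfPreserves ((evaluation _ _).obj M)
    (colimit.isColimit (localCohomology.diagram (localCohomology.idealPowersDiagram I) i))
  have : PreservesFilteredColimitsOfSize.{0, 0} (forget (ModuleCat.{u} R)) :=
    preservesSmallestFilteredColimits_of_preservesFilteredColimits.{u, u} _
  have : PreservesColimitsOfShape ℕᵒᵖᵒᵖ (forget (ModuleCat.{u} R)) :=
    PreservesFilteredColimitsOfSize.preserves_filtered_colimits _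
  refine (ModuleCat.subsingleton_iff_of_isColimit hc).trans ⟨fun h n x ↦ ?_, fun h n x ↦ ?_⟩
  · obtain ⟨k, f, hf⟩ := h (op (op n)) x
    exact ⟨k.unop.unop, f.unop.unop.le, hf⟩
  · obtain ⟨m, hnm, hm⟩ := h n.unop.unop x
    exact ⟨op (op m), (homOfLE hnm).op.op, hm⟩

lemma Ideal.extVanishes_iff_subsingleton_localCohomology (I : Ideal R) (i : ℕ)
    (M : ModuleCat.{u} R) :
    I.ExtVanishes M (i + 1) ↔ Subsingleton ((localCohomology I (i + 1)).obj M) := by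
  rw [localCohomology.subsingleton_iff]
  constructor
  · intro h n x
    obtain ⟨e, he⟩ := ProjectiveResolution.exists_abelianExt_forall_map_eq_zero_iff x
    obtain ⟨m, hm, hme⟩ := h (I ^ n) n le_rfl e
    exact ⟨n + m, Nat.le_add_right n m, (he _).2 (Ideal.mk₀_quotientProj_comp_eq_zero_of_le
      (Ideal.pow_le_pow_right (Nat.le_add_left m n)) hm hme)⟩
  · intro h J n hJ e
    obtain ⟨x, hx⟩ := ProjectiveResolution.exists_ext_forall_map_eq_zero_iff (A := R)
      ((Abelian.Ext.mk₀ (Ideal.quotientProj hJ)).comp e (zero_add _))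
    obtain ⟨m, hm, hmx⟩ := h n x
    have := (hx _).1 hmx
    rw [Abelian.Ext.mk₀_comp_mk₀_assoc, Ideal.quotientProj_comp] at this
    exact ⟨m, _, this⟩

end

section
variable {R : Type u} [CommRing R]

lemma cohomologicalDimension_le_iff {I : Ideal R} {M : ModuleCat.{u} R} {d : ℕ} :
    cohomologicalDimension I M ≤ d ↔ ∀ i, d ≤ i → I.ExtVanishes M (i + 1) := by
  simp only [Ideal.extVanishes_iff_subsingleton_localCohomology, cohomologicalDimension,
    sSup_le_iff]
  constructor
  · intro h i hi
    rw [← not_nontrivial_iff_subsingleton]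
    intro hn
    have : i + 1 ≤ d := by exact_mod_cast h _ ⟨i + 1, rfl, hn⟩
    omega
  · rintro h _ ⟨i, rfl, hi⟩
    by_contra hlt
    have hlt : d < i := by exact_mod_cast not_le.1 hlt
    obtain ⟨j, rfl⟩ := Nat.exists_eq_add_of_lt hlt
    exact not_subsingleton_iff_nontrivial.2 hi (h (d + j) (Nat.le_add_right d j))

lemma cohomologicalDimension_bot (M : ModuleCat.{u} R) :
    cohomologicalDimension (⊥ : Ideal R) M = 0 :=
  nonpos_iff_eq_zero.1 (cohomologicalDimension_le_iff (d := 0).2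
    fun i _ ↦ Ideal.extVanishes_bot M i)

variable [IsNoetherianRing R]

lemma cohomologicalDimension_sup_span_singleton_le {I : Ideal R} {M : ModuleCat.{u} R} {d : ℕ}
    (h : cohomologicalDimension I M ≤ d) (x : R) :
    cohomologicalDimension (I ⊔ Ideal.span {x}) M ≤ (d + 1 : ℕ) := by
  rw [cohomologicalDimension_le_iff] at h ⊢
  intro i hi
  obtain ⟨j, rfl⟩ := Nat.exists_eq_add_of_le' hi
  exact (h (j + d) (Nat.le_add_left d j)).sup_span_singleton (h (j + d + 1) (by omega)) x

lemma exists_lt_cohomologicalDimension_eq (M : ModuleCat.{u} R) (I : Ideal R) {d : ℕ}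
    (hd : (d : ℕ∞) < cohomologicalDimension I M) :
    ∃ J < I, cohomologicalDimension J M = d := by
  classical
  obtain ⟨s, rfl⟩ := IsNoetherian.noetherian I
  induction s using Finset.induction with
  | empty => simp [cohomologicalDimension_bot] at hd
  | insert x s _ ih =>
    have hs : Ideal.span (insert x s : Finset R) = Ideal.span (s : Set R) ⊔ Ideal.span {x} := by
      rw [Finset.coe_insert, Ideal.span_insert, sup_comm]
    change (d : ℕ∞) < cohomologicalDimension (Ideal.span _) M at hd
    change ∃ J < Ideal.span _, _
    rw [hs] at hd ⊢
    rcases lt_trichotomy (d : ℕ∞) (cohomologicalDimension (Ideal.span (s : Set R)) M)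
      with h | h | h
    · obtain ⟨J, hJ, hJd⟩ := ih h
      exact ⟨J, hJ.trans_le le_sup_left, hJd⟩
    · refine ⟨_, lt_of_le_of_ne le_sup_left fun he ↦ ?_, h.symm⟩
      rw [← he, h] at hd
      exact hd.false
    · obtain ⟨e, rfl⟩ : ∃ e, d = e + 1 := Nat.exists_eq_succ_of_ne_zero fun h0 ↦ by
        simp [h0] at h
      rw [Nat.cast_add_one, ENat.lt_add_one_iff (ENat.natCast_ne_top e)] at h
      exact absurd (cohomologicalDimension_sup_span_singleton_le h x) (not_le.2 hd)

end

/-- if `cd(I,M) = c > 0`, there is a descending chain of ideals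
`I = I_c ⊋ I_{c-1} ⊋ ⋯ ⊋ I_0` with `cd(I_i, M) = i` for all `0 ≤ i ≤ c`. -/
theorem descending_chain_of_ideals_with_successive_cohomological_dimensions
    (R : Type u) [CommRing R] [IsNoetherianRing R] (I : Ideal R) (M : ModuleCat.{u} R)
    (c : ℕ) (hc : 0 < c) (hcd : cohomologicalDimension I M = (c : ℕ∞)) :
    ∃ J : ℕ → Ideal R, J c = I ∧ (∀ i < c, J i < J (i + 1)) ∧
      ∀ i ≤ c, cohomologicalDimension (J i) M = (i : ℕ∞) := by
  clear hc
  induction c generalizing I with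
  | zero => exact ⟨fun _ ↦ I, rfl, by simp, by simpa using hcd⟩
  | succ c ih =>
    obtain ⟨I', hI', hI'c⟩ := exists_lt_cohomologicalDimension_eq M I (d := c)
      (by rw [hcd]; exact_mod_cast Nat.lt_succ_self c)
    obtain ⟨J, hJc, hJlt, hJcd⟩ := ih I' hI'c
    refine ⟨fun i ↦ if i ≤ c then J i else I, by simp, fun i hi ↦ ?_, fun i hi ↦ ?_⟩
    · rcases Nat.lt_succ_iff_lt_or_eq.1 hi with h | rfl
      · simpa [h.le, Nat.succ_le_of_lt h] using hJlt i h
      · simpa [hJc] using hI'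
    · rcases Nat.le_succ_iff.1 hi with h | rfl
      · simpa [h] using hJcd i h
      · simpa using hcd
end

section
/- Let R be a commutative Noetherian ring with unity, I an ideal of R, and M an R-module with cohomological dimension cd(I,M) = c > 0. Then there exists a descending chain of ideals I = I_c ⊋ I_{c-1} ⊋ ⋯ ⊋ I_0 of R such that cd(I_i, M) = i for every 0 ≤ i ≤ c and, moreover, the top local cohomology module H^i_{I_i}(M) is not an Artinian R-module for every i with 0 ≤ i ≤ c − 1. -/
universe u

open CategoryTheory

section

open Limits Opposite

namespace CategoryTheory

section LeftDerivedConnecting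

variable {C D : Type*} [Category* C] [Category* D] [Abelian C] [Abelian D]

/-- The homology of the complex obtained by applying an additive functor to a chain complex. -/
noncomputable abbrev mapHomology (F : C ⥤ D) [F.Additive] (K : ChainComplex C ℕ) (n : ℕ) : D :=
  ((F.mapHomologicalComplex (ComplexShape.down ℕ)).obj K).homology n

/-- The functoriality of `mapHomology` in the chain complex. -/
noncomputable abbrev mapHomologyMap (F : C ⥤ D) [F.Additive] {K L : ChainComplex C ℕ}
    (φ : K ⟶ L) (n : ℕ) : mapHomology F K n ⟶ mapHomology F L n :=
  HomologicalComplex.homologyMap ((F.mapHomologicalComplex (ComplexShape.down ℕ)).map φ) n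

/-- The functoriality of `mapHomology` in the functor. -/
noncomputable abbrev mapHomologyNatTrans {F G : C ⥤ D} [F.Additive] [G.Additive] (α : F ⟶ G)
    (K : ChainComplex C ℕ) (n : ℕ) : mapHomology F K n ⟶ mapHomology G K n :=
  HomologicalComplex.homologyMap
    ((NatTrans.mapHomologicalComplex α (ComplexShape.down ℕ)).app K) n

lemma isZero_mapHomology_projectiveResolution (F : C ⥤ D) [F.Additive] [F.PreservesHomology]
    {X : C} (P : ProjectiveResolution X) (n : ℕ) :
    IsZero (mapHomology F P.complex (n + 1)) := by
  rw [← HomologicalComplex.exactAt_iff_isZero_homology]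
  exact (P.complex_exactAt_succ n).map F

variable {F₁ F₂ F₃ : C ⥤ D} [F₁.Additive] [F₂.Additive] [F₃.Additive]
  (α : F₁ ⟶ F₂) (β : F₂ ⟶ F₃) (w : ∀ X, α.app X ≫ β.app X = 0)

/-- The short complex of chain complexes obtained by applying a sequence of functors
`F₁ ⟶ F₂ ⟶ F₃` to a chain complex. -/
@[simps]
def mapShortComplexOfNatTrans (K : ChainComplex C ℕ) : ShortComplex (ChainComplex D ℕ) where
  X₁ := (F₁.mapHomologicalComplex _).obj K
  X₂ := (F₂.mapHomologicalComplex _).obj K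
  X₃ := (F₃.mapHomologicalComplex _).obj K
  f := (NatTrans.mapHomologicalComplex α _).app K
  g := (NatTrans.mapHomologicalComplex β _).app K
  zero := by
    ext i
    exact w (K.X i)

/-- The functoriality of `mapShortComplexOfNatTrans` in the chain complex. -/
@[simps]
def mapShortComplexOfNatTransMap {K L : ChainComplex C ℕ} (φ : K ⟶ L) :
    mapShortComplexOfNatTrans α β w K ⟶ mapShortComplexOfNatTrans α β w L where
  τ₁ := (F₁.mapHomologicalComplex _).map φ
  τ₂ := (F₂.mapHomologicalComplex _).map φ
  τ₃ := (F₃.mapHomologicalComplex _).map φ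
  comm₁₂ := ((NatTrans.mapHomologicalComplex α _).naturality φ)
  comm₂₃ := ((NatTrans.mapHomologicalComplex β _).naturality φ)

lemma mapShortComplexOfNatTrans_shortExact
    (h : ∀ (P : C) [Projective P], (ShortComplex.mk _ _ (w P)).ShortExact)
    {X : C} (P : ProjectiveResolution X) :
    (mapShortComplexOfNatTrans α β w P.complex).ShortExact :=
  HomologicalComplex.shortExact_of_degreewise_shortExact _ fun i => h (P.complex.X i)

variable (h : ∀ (P : C) [Projective P], (ShortComplex.mk _ _ (w P)).ShortExact)

lemma down_rel_succ (n : ℕ) : (ComplexShape.down ℕ).Rel (n + 1) n := rfl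

/-- The connecting morphism in homology after applying a sequence of functors
to a projective resolution. -/
noncomputable def mapHomologyδ {X : C} (P : ProjectiveResolution X) (n : ℕ) :
    mapHomology F₃ P.complex (n + 1) ⟶ mapHomology F₁ P.complex n :=
  (mapShortComplexOfNatTrans_shortExact α β w h P).δ (n + 1) n (down_rel_succ n)

lemma mapHomologyδ_naturality {X Y : C} (P : ProjectiveResolution X) (Q : ProjectiveResolution Y)
    (φ : P.complex ⟶ Q.complex) (n : ℕ) :
    mapHomologyδ α β w h P n ≫ mapHomologyMap F₁ φ n =
      mapHomologyMap F₃ φ (n + 1) ≫ mapHomologyδ α β w h Q n :=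
  HomologicalComplex.HomologySequence.δ_naturality (mapShortComplexOfNatTransMap α β w φ)
    (mapShortComplexOfNatTrans_shortExact α β w h P)
    (mapShortComplexOfNatTrans_shortExact α β w h Q) (n + 1) n (down_rel_succ n)

lemma mapHomologyδ_comp {X : C} (P : ProjectiveResolution X) (n : ℕ) :
    mapHomologyδ α β w h P n ≫ mapHomologyNatTrans α P.complex n = 0 :=
  (mapShortComplexOfNatTrans_shortExact α β w h P).δ_comp (n + 1) n (down_rel_succ n)

lemma mapHomologyδ_exact {X : C} (P : ProjectiveResolution X) (n : ℕ) :
    (ShortComplex.mk _ _ (mapHomologyδ_comp α β w h P n)).Exact :=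
  (mapShortComplexOfNatTrans_shortExact α β w h P).homology_exact₁ (n + 1) n (down_rel_succ n)

instance mono_mapHomologyδ [F₂.PreservesHomology] {X : C} (P : ProjectiveResolution X) (n : ℕ) :
    Mono (mapHomologyδ α β w h P n) :=
  (mapShortComplexOfNatTrans_shortExact α β w h P).mono_δ (n + 1) n (down_rel_succ n)
    (isZero_mapHomology_projectiveResolution F₂ P n)

instance isIso_mapHomologyδ [F₂.PreservesHomology] {X : C} (P : ProjectiveResolution X) (n : ℕ) :
    IsIso (mapHomologyδ α β w h P (n + 1)) :=
  (mapShortComplexOfNatTrans_shortExact α β w h P).isIso_δ (n + 1 + 1) (n + 1)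
    (down_rel_succ (n + 1))
    (isZero_mapHomology_projectiveResolution F₂ P (n + 1))
    (isZero_mapHomology_projectiveResolution F₂ P n)

section

variable [HasProjectiveResolutions C]

/-- Left derived functors as homology of the chosen projective resolution. -/
noncomputable def leftDerivedIsoMapHomology (F : C ⥤ D) [F.Additive] (X : C) (n : ℕ) :
    (F.leftDerived n).obj X ≅ mapHomology F (projectiveResolution X).complex n :=
  (projectiveResolution X).isoLeftDerivedObj F n

lemma leftDerivedIsoMapHomology_hom_naturality (F : C ⥤ D) [F.Additive] {X Y : C} (f : X ⟶ Y)
    (n : ℕ) : (F.leftDerived n).map f ≫ (leftDerivedIsoMapHomology F Y n).hom =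
      (leftDerivedIsoMapHomology F X n).hom ≫ mapHomologyMap F
        (ProjectiveResolution.lift f (projectiveResolution X) (projectiveResolution Y)) n :=
  ProjectiveResolution.isoLeftDerivedObj_hom_naturality f _ _ _
    (ProjectiveResolution.lift_commutes_zero f _ _) F n

lemma leftDerived_app_comp_leftDerivedIsoMapHomology_hom (n : ℕ) (X : C) :
    (NatTrans.leftDerived α n).app X ≫ (leftDerivedIsoMapHomology F₂ X n).hom =
      (leftDerivedIsoMapHomology F₁ X n).hom ≫
        mapHomologyNatTrans α (projectiveResolution X).complex n := by
  rw [← Iso.eq_comp_inv, Category.assoc]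
  exact (projectiveResolution X).leftDerived_app_eq α n

/-- The connecting morphism between left derived functors. -/
noncomputable def leftDerivedδ (n : ℕ) : F₃.leftDerived (n + 1) ⟶ F₁.leftDerived n where
  app X := (leftDerivedIsoMapHomology F₃ X (n + 1)).hom ≫
    mapHomologyδ α β w h (projectiveResolution X) n ≫ (leftDerivedIsoMapHomology F₁ X n).inv
  naturality X Y f := by
    rw [← cancel_mono (leftDerivedIsoMapHomology F₁ Y n).hom]
    simp only [Category.assoc, Iso.inv_hom_id, Category.comp_id,
      leftDerivedIsoMapHomology_hom_naturality, Iso.inv_hom_id_assoc, mapHomologyδ_naturality]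
    rw [← Category.assoc, leftDerivedIsoMapHomology_hom_naturality, Category.assoc]

lemma leftDerivedδ_app_comp (n : ℕ) (X : C) : (leftDerivedδ α β w h n).app X ≫
    (leftDerivedIsoMapHomology F₁ X n).hom = (leftDerivedIsoMapHomology F₃ X (n + 1)).hom ≫
      mapHomologyδ α β w h (projectiveResolution X) n := by
  simp [leftDerivedδ]

lemma leftDerivedδ_comp (n : ℕ) (X : C) :
    (leftDerivedδ α β w h n).app X ≫ (NatTrans.leftDerived α n).app X = 0 := by
  rw [← cancel_mono (leftDerivedIsoMapHomology F₂ X n).hom, Category.assoc,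
    leftDerived_app_comp_leftDerivedIsoMapHomology_hom, reassoc_of% leftDerivedδ_app_comp,
    mapHomologyδ_comp, zero_comp, comp_zero]

lemma leftDerivedδ_exact (n : ℕ) (X : C) :
    (ShortComplex.mk _ _ (leftDerivedδ_comp α β w h n X)).Exact :=
  ShortComplex.exact_of_iso
    (ShortComplex.isoMk (leftDerivedIsoMapHomology F₃ X (n + 1))
      (leftDerivedIsoMapHomology F₁ X n) (leftDerivedIsoMapHomology F₂ X n)
      (leftDerivedδ_app_comp α β w h n X).symm
      (leftDerived_app_comp_leftDerivedIsoMapHomology_hom α n X).symm).symm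
    (mapHomologyδ_exact α β w h (projectiveResolution X) n)

instance mono_leftDerivedδ_app [F₂.PreservesHomology] (n : ℕ) (X : C) :
    Mono ((leftDerivedδ α β w h n).app X) := by
  dsimp only [leftDerivedδ]
  infer_instance

instance isIso_leftDerivedδ [F₂.PreservesHomology] (n : ℕ) :
    IsIso (leftDerivedδ α β w h (n + 1)) := by
  rw [NatTrans.isIso_iff_isIso_app]
  intro X
  dsimp only [leftDerivedδ]
  infer_instance

lemma fromLeftDerivedZero_naturality (X : C) :
    (NatTrans.leftDerived α 0).app X ≫ F₂.fromLeftDerivedZero.app X =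
      F₁.fromLeftDerivedZero.app X ≫ α.app X := by
  rw [(projectiveResolution X).fromLeftDerivedZero_eq,
    (projectiveResolution X).fromLeftDerivedZero_eq,
    (projectiveResolution X).leftDerived_app_eq]
  simp only [Category.assoc]
  congr 1
  have h₁ : mapHomologyNatTrans α (projectiveResolution X).complex 0 ≫
    HomologicalComplex.homologyι _ _ = HomologicalComplex.homologyι _ _ ≫
      HomologicalComplex.opcyclesMap
        ((NatTrans.mapHomologicalComplex α _).app (projectiveResolution X).complex) 0 :=
    HomologicalComplex.homologyι_naturality _ _
  have h₂ : HomologicalComplex.opcyclesMap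
        ((NatTrans.mapHomologicalComplex α _).app (projectiveResolution X).complex) 0 ≫
      (projectiveResolution X).fromLeftDerivedZero' F₂ =
      (projectiveResolution X).fromLeftDerivedZero' F₁ ≫ α.app X := by
    rw [← cancel_epi (HomologicalComplex.pOpcycles _ _)]
    rw [HomologicalComplex.p_opcyclesMap_assoc,
      ProjectiveResolution.pOpcycles_comp_fromLeftDerivedZero',
      ProjectiveResolution.pOpcycles_comp_fromLeftDerivedZero'_assoc]
    exact (α.naturality _).symm
  have h₃ := (projectiveResolution X).isoLeftDerivedObj F₂ 0 |>.inv_hom_id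
  rw [reassoc_of% h₃]
  change mapHomologyNatTrans α (projectiveResolution X).complex 0 ≫
    HomologicalComplex.homologyι _ _ ≫ _ = (HomologicalComplex.homologyι _ _ ≫ _) ≫ _
  rw [reassoc_of% h₁, h₂, Category.assoc]

end

end LeftDerivedConnecting

end CategoryTheory

namespace localCohomology

variable {R : Type u} [CommRing R]

/-- The functor `Hom(-, M)` with values in the opposite category. -/
noncomputable abbrev homOp (M : ModuleCat.{u} R) : ModuleCat.{u} R ⥤ (ModuleCat.{u} R)ᵒᵖ :=
  ((linearYoneda R (ModuleCat.{u} R)).obj M).rightOp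

instance preservesLimits_linearYoneda_obj (M : ModuleCat.{u} R) :
    PreservesLimits ((linearYoneda R (ModuleCat.{u} R)).obj M) :=
  have : PreservesLimits ((linearYoneda R (ModuleCat.{u} R)).obj M ⋙ forget _) :=
    (inferInstance : PreservesLimits (yoneda.obj M))
  preservesLimits_of_reflects_of_preserves _ (forget _)

instance preservesFiniteColimits_homOp (M : ModuleCat.{u} R) : PreservesFiniteColimits (homOp M) :=
  preservesFiniteColimits_rightOp _

instance preservesHomology_homOp (E : ModuleCat.{u} R) [Injective E] :
    (homOp E).PreservesHomology := by
  have : (homOp E).PreservesMonomorphisms := ⟨fun {X Y} f hf => by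
    have : Epi (((linearYoneda R (ModuleCat.{u} R)).obj E).map f.op) := by
      rw [ModuleCat.epi_iff_surjective]
      intro g
      exact ⟨Injective.factorThru g f, Injective.comp_factorThru g f⟩
    exact inferInstanceAs (Mono (((linearYoneda R (ModuleCat.{u} R)).obj E).map f.op).op)⟩
  exact Functor.preservesHomology_of_preservesMonos_and_cokernels _

variable {S : ShortComplex (ModuleCat.{u} R)}

lemma homOp_map_comp (S : ShortComplex (ModuleCat.{u} R)) (X : ModuleCat.{u} R) :
    (NatTrans.rightOp ((linearYoneda R (ModuleCat.{u} R)).map S.g)).app X ≫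
      (NatTrans.rightOp ((linearYoneda R (ModuleCat.{u} R)).map S.f)).app X = 0 := by
  apply Quiver.Hom.unop_inj
  ext (f : X ⟶ S.X₁)
  change (f ≫ S.f) ≫ S.g = 0
  simp

lemma shortExact_homOp (hS : S.ShortExact) (P : ModuleCat.{u} R) [Projective P] :
    (ShortComplex.mk _ _ (homOp_map_comp S P)).ShortExact := by
  have := hS.mono_f
  have := hS.epi_g
  let T : ShortComplex (ModuleCat.{u} R) := ShortComplex.mk
    (((linearYoneda R (ModuleCat.{u} R)).map S.f).app (op P))
    (((linearYoneda R (ModuleCat.{u} R)).map S.g).app (op P))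
    (congrArg Quiver.Hom.unop (homOp_map_comp S P))
  have hT : T.ShortExact :=
    { exact := by
        rw [ShortComplex.moduleCat_exact_iff]
        intro (f : P ⟶ S.X₂) (hf : f ≫ S.g = 0)
        exact ⟨hS.exact.lift f hf, hS.exact.lift_f f hf⟩
      mono_f := by
        rw [ModuleCat.mono_iff_injective]
        intro (f : P ⟶ S.X₁) (g : P ⟶ S.X₁) (hfg : f ≫ S.f = g ≫ S.f)
        exact (cancel_mono S.f).1 hfg
      epi_g := by
        rw [ModuleCat.epi_iff_surjective]
        intro (f : P ⟶ S.X₃)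
        exact ⟨Projective.factorThru f S.g, Projective.factorThru_comp f S.g⟩ }
  exact hT.op

/-- `Ext^i(-, M)` as a contravariant functor. -/
noncomputable abbrev extFunctor (i : ℕ) (M : ModuleCat.{u} R) :
    (ModuleCat.{u} R)ᵒᵖ ⥤ ModuleCat.{u} R :=
  ((homOp M).leftDerived i).leftOp

/-- The connecting morphism `Ext^i(-, M') ⟶ Ext^{i+1}(-, M)`. -/
noncomputable def extFunctorδ (hS : S.ShortExact) (i : ℕ) :
    extFunctor i S.X₃ ⟶ extFunctor (i + 1) S.X₁ :=
  NatTrans.leftOp (leftDerivedδ _ _ (homOp_map_comp S) (shortExact_homOp hS) i)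

lemma isIso_extFunctorδ (hS : S.ShortExact) [Injective S.X₂] (i : ℕ) :
    IsIso (extFunctorδ hS (i + 1)) := by
  rw [NatTrans.isIso_iff_isIso_app]
  intro X
  exact inferInstanceAs (IsIso ((leftDerivedδ _ _ (homOp_map_comp S) (shortExact_homOp hS)
    (i + 1)).app X.unop).unop)

/-- `Ext^0(-, M)` is `Hom(-, M)`. -/
noncomputable def homToExtFunctorZero (M : ModuleCat.{u} R) :
    (linearYoneda R (ModuleCat.{u} R)).obj M ⟶ extFunctor 0 M :=
  NatTrans.leftOp (homOp M).fromLeftDerivedZero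

instance isIso_homToExtFunctorZero_app (M : ModuleCat.{u} R) (X) :
    IsIso ((homToExtFunctorZero M).app X) :=
  inferInstanceAs (IsIso ((homOp M).fromLeftDerivedZero.app X.unop).unop)

/-- The connecting morphism `Hom(-, M') ⟶ Ext^1(-, M)`. -/
noncomputable def homδ (hS : S.ShortExact) :
    (linearYoneda R (ModuleCat.{u} R)).obj S.X₃ ⟶ extFunctor 1 S.X₁ :=
  homToExtFunctorZero S.X₃ ≫ extFunctorδ hS 0

lemma homδ_app_surjective (hS : S.ShortExact) [Injective S.X₂] (X : (ModuleCat.{u} R)ᵒᵖ) :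
    Function.Surjective ((homδ hS).app X) := by
  have h : Epi ((extFunctorδ hS 0).app X) :=
    unop_epi_of_mono ((leftDerivedδ _ _ (homOp_map_comp S) (shortExact_homOp hS) 0).app X.unop)
  rw [ModuleCat.epi_iff_surjective] at h
  exact h.comp (ConcreteCategory.bijective_of_isIso ((homToExtFunctorZero S.X₃).app X)).2

lemma homδ_app_eq_zero_iff (hS : S.ShortExact) (X : ModuleCat.{u} R) (f : X ⟶ S.X₃) :
    (homδ hS).app (op X) f = 0 ↔ ∃ g : X ⟶ S.X₂, g ≫ S.g = f := by
  let a : (extFunctor 0 S.X₂).obj (op X) ⟶ (extFunctor 0 S.X₃).obj (op X) :=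
    ((NatTrans.leftDerived (NatTrans.rightOp
      ((linearYoneda R (ModuleCat.{u} R)).map S.g)) 0).app X).unop
  have hn (g : X ⟶ S.X₂) : a ((homToExtFunctorZero S.X₂).app (op X) g) =
      (homToExtFunctorZero S.X₃).app (op X) (g ≫ S.g) :=
    congrArg (fun φ => φ.unop.hom g) (fromLeftDerivedZero_naturality
      (NatTrans.rightOp ((linearYoneda R (ModuleCat.{u} R)).map S.g)) X)
  have hz (y : (extFunctor 0 S.X₂).obj (op X)) : (extFunctorδ hS 0).app (op X) (a y) = 0 :=
    congrArg (fun φ => φ.unop.hom y)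
      (leftDerivedδ_comp _ _ (homOp_map_comp S) (shortExact_homOp hS) 0 X)
  have hex (y : (extFunctor 0 S.X₃).obj (op X)) (hy : (extFunctorδ hS 0).app (op X) y = 0) :
      ∃ z, a z = y :=
    (ShortComplex.moduleCat_exact_iff _).1
      (leftDerivedδ_exact _ _ (homOp_map_comp S) (shortExact_homOp hS) 0 X).unop y hy
  have hbij (M : ModuleCat.{u} R) : Function.Bijective ((homToExtFunctorZero M).app (op X)) :=
    ConcreteCategory.bijective_of_isIso _
  constructor
  · intro hf
    obtain ⟨z, hz⟩ := hex ((homToExtFunctorZero S.X₃).app (op X) f) hf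
    obtain ⟨g, rfl⟩ := (hbij S.X₂).2 z
    exact ⟨g, (hbij S.X₃).1 ((hn g).symm.trans hz)⟩
  · rintro ⟨g, rfl⟩
    change (extFunctorδ hS 0).app (op X) ((homToExtFunctorZero S.X₃).app (op X) (g ≫ S.g)) = 0
    rw [← hn, hz]

end localCohomology

namespace localCohomology

variable {R : Type u} [CommRing R]

/-- The inverse system `R ⧸ I ^ n`, contravariantly. -/
noncomputable abbrev powersQuotient (I : Ideal R) : ℕᵒᵖᵒᵖ ⥤ (ModuleCat.{u} R)ᵒᵖ :=
  (ringModIdeals (idealPowersDiagram I)).op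

/-- The cocone exhibiting local cohomology as a colimit of `Ext` modules. -/
noncomputable def extCocone (I : Ideal R) (i : ℕ) (M : ModuleCat.{u} R) :
    Cocone (powersQuotient I ⋙ extFunctor i M) :=
  ((evaluation _ _).obj M).mapCocone (colimit.cocone (diagram (idealPowersDiagram I) i))

/-- The cocone `extCocone` is a colimit cocone. -/
noncomputable def isColimitExtCocone (I : Ideal R) (i : ℕ) (M : ModuleCat.{u} R) :
    IsColimit (extCocone I i M) :=
  isColimitOfPreserves ((evaluation _ _).obj M)
    (colimit.isColimit (diagram (idealPowersDiagram I) i))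

instance preservesColimit_forget (I : Ideal R) (i : ℕ) (M : ModuleCat.{u} R) :
    PreservesColimit (powersQuotient I ⋙ extFunctor i M) (forget (ModuleCat.{u} R)) :=
  have : PreservesFilteredColimitsOfSize.{0, 0} (forget (ModuleCat.{u} R)) :=
    preservesFilteredColimitsOfSize_shrink.{0, u, 0, u} _
  inferInstance

/-- Dimension shifting along a short exact sequence with injective middle term. -/
noncomputable def dimensionShift {S : ShortComplex (ModuleCat.{u} R)} (hS : S.ShortExact)
    [Injective S.X₂] (I : Ideal R) (i : ℕ) :
    (localCohomology I (i + 1)).obj S.X₃ ≅ (localCohomology I (i + 2)).obj S.X₁ :=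
  have := isIso_extFunctorδ hS i
  (isColimitExtCocone I (i + 1) S.X₃).coconePointsIsoOfNatIso
    (isColimitExtCocone I (i + 2) S.X₁)
    (Functor.isoWhiskerLeft (powersQuotient I) (asIso (extFunctorδ hS (i + 1))))

/-- The submodule of elements annihilated by a power of `I`. -/
def torsionPowers (I : Ideal R) (N : Type*) [AddCommGroup N] [Module R N] : Submodule R N where
  carrier := {y | ∃ n : ℕ, ∀ a ∈ I ^ n, a • y = 0}
  zero_mem' := ⟨0, by simp⟩
  add_mem' := by
    rintro y z ⟨n, hn⟩ ⟨m, hm⟩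
    refine ⟨n + m, fun a ha => ?_⟩
    rw [smul_add, hn a (Ideal.pow_le_pow_right (Nat.le_add_right _ _) ha),
      hm a (Ideal.pow_le_pow_right (Nat.le_add_left _ _) ha), add_zero]
  smul_mem' := by
    rintro r y ⟨n, hn⟩
    exact ⟨n, fun a ha => by rw [smul_comm, hn a ha, smul_zero]⟩

/-- The morphism `R ⧸ I ^ n ⟶ N` sending `1` to an element annihilated by `I ^ n`. -/
noncomputable def quotientHom {I : Ideal R} {N : ModuleCat.{u} R} (n : ℕ) (y : N)
    (hy : ∀ a ∈ I ^ n, a • y = 0) : ModuleCat.of R (R ⧸ I ^ n) ⟶ N :=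
  ModuleCat.ofHom (Submodule.liftQ (I ^ n) (LinearMap.toSpanSingleton R N y) hy)

lemma quotientHom_ext {I : Ideal R} {N : ModuleCat.{u} R} {n : ℕ}
    {f g : ModuleCat.of R (R ⧸ I ^ n) ⟶ N}
    (h : f (Ideal.Quotient.mk (I ^ n) 1) = g (Ideal.Quotient.mk (I ^ n) 1)) : f = g := by
  apply ModuleCat.hom_ext
  apply Submodule.linearMap_qext
  apply LinearMap.ext_ring
  exact h

lemma smul_hom_mk_one {I : Ideal R} {N : ModuleCat.{u} R} {n : ℕ}
    (f : ModuleCat.of R (R ⧸ I ^ n) ⟶ N) {a : R} (ha : a ∈ I ^ n) :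
    a • f (Ideal.Quotient.mk (I ^ n) 1) = 0 := by
  have : a • (Ideal.Quotient.mk (I ^ n) 1 : R ⧸ I ^ n) = 0 := by
    change Ideal.Quotient.mk (I ^ n) (a * 1) = 0
    exact Ideal.Quotient.eq_zero_iff_mem.2 (by rwa [mul_one])
  rw [← map_smul]
  exact (congrArg f this).trans (map_zero _)

/-- The arrow between indices of the system of powers. -/
def indexHom {n m : ℕ} (h : n ≤ m) : (op (op n) : ℕᵒᵖᵒᵖ) ⟶ op (op m) :=
  (homOfLE h).op.op

lemma powersQuotient_map_quotientHom {I : Ideal R} {N : ModuleCat.{u} R} {n m : ℕ} (h : n ≤ m)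
    (y : N) (hy : ∀ a ∈ I ^ n, a • y = 0) :
    ((powersQuotient I).map (indexHom h)).unop ≫ quotientHom n y hy =
      quotientHom m y (fun a ha => hy a (Ideal.pow_le_pow_right h ha)) :=
  quotientHom_ext rfl

section

variable {I : Ideal R} {N M : ModuleCat.{u} R} {i : ℕ}
  (η : (linearYoneda R (ModuleCat.{u} R)).obj N ⟶ extFunctor i M)

/-- The class in local cohomology of an element annihilated by `I ^ n`. -/
noncomputable def torsionClass (n : ℕ) (y : N) (hy : ∀ a ∈ I ^ n, a • y = 0) :
    (localCohomology I i).obj M :=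
  (extCocone I i M).ι.app (op (op n)) (η.app (op (ModuleCat.of R (R ⧸ I ^ n))) (quotientHom n y hy))

lemma extFunctor_map_quotientHom {n m : ℕ} (h : n ≤ m) (y : N) (hy : ∀ a ∈ I ^ n, a • y = 0) :
    (powersQuotient I ⋙ extFunctor i M).map (indexHom h)
        (η.app (op (ModuleCat.of R (R ⧸ I ^ n))) (quotientHom n y hy)) =
      η.app (op (ModuleCat.of R (R ⧸ I ^ m)))
        (quotientHom m y (fun a ha => hy a (Ideal.pow_le_pow_right h ha))) := by
  have := congrArg (fun φ => φ.hom (quotientHom n y hy))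
    (η.naturality ((powersQuotient I).map (indexHom h)))
  rw [← powersQuotient_map_quotientHom h y hy]
  exact this.symm

lemma torsionClass_eq_of_le {n m : ℕ} (h : n ≤ m) (y : N) (hy : ∀ a ∈ I ^ n, a • y = 0) :
    torsionClass η m y (fun a ha => hy a (Ideal.pow_le_pow_right h ha)) =
      torsionClass η n y hy := by
  have := congrArg (fun φ => φ.hom (η.app (op (ModuleCat.of R (R ⧸ I ^ n))) (quotientHom n y hy)))
    ((extCocone I i M).w (indexHom h))
  refine Eq.trans ?_ this
  exact congrArg ((extCocone I i M).ι.app (op (op m))) (extFunctor_map_quotientHom η h y hy).symm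

lemma torsionClass_eq {n m : ℕ} (y : N) (hy : ∀ a ∈ I ^ n, a • y = 0)
    (hy' : ∀ a ∈ I ^ m, a • y = 0) : torsionClass η n y hy = torsionClass η m y hy' := by
  rcases le_total n m with h | h
  · exact (torsionClass_eq_of_le η h y hy).symm
  · exact torsionClass_eq_of_le η h y hy'

lemma torsionClass_eq_zero_iff (n : ℕ) (y : N) (hy : ∀ a ∈ I ^ n, a • y = 0) :
    torsionClass η n y hy = 0 ↔ ∃ (m : ℕ) (hm : ∀ a ∈ I ^ m, a • y = 0),
      η.app (op (ModuleCat.of R (R ⧸ I ^ m))) (quotientHom m y hm) = 0 := by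
  constructor
  · intro h
    obtain ⟨k, f, g, hfg⟩ := Concrete.isColimit_exists_of_rep_eq _ (isColimitExtCocone I i M)
      (i := op (op n)) (j := op (op n))
      (η.app (op (ModuleCat.of R (R ⧸ I ^ n))) (quotientHom n y hy)) 0 (h.trans (map_zero _).symm)
    have hle : n ≤ k.unop.unop := leOfHom f.unop.unop
    rw [map_zero] at hfg
    exact ⟨k.unop.unop, fun a ha => hy a (Ideal.pow_le_pow_right hle ha),
      (extFunctor_map_quotientHom η hle y hy).symm.trans hfg⟩
  · rintro ⟨m, hm, h⟩
    rw [torsionClass_eq η y hy hm, torsionClass, h]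
    exact map_zero _

lemma torsionClass_add (n : ℕ) (y z : N) (hy : ∀ a ∈ I ^ n, a • y = 0)
    (hz : ∀ a ∈ I ^ n, a • z = 0) (hyz : ∀ a ∈ I ^ n, a • (y + z) = 0) :
    torsionClass η n (y + z) hyz = torsionClass η n y hy + torsionClass η n z hz := by
  have : quotientHom n (y + z) hyz = quotientHom n y hy + quotientHom n z hz := by
    apply quotientHom_ext
    change (1 : R) • (y + z) = (1 : R) • y + (1 : R) • z
    exact smul_add _ _ _
  rw [torsionClass, this]
  refine (congrArg ((extCocone I i M).ι.app (op (op n))) (map_add _ _ _)).trans (map_add _ _ _)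

lemma torsionClass_smul (n : ℕ) (r : R) (y : N) (hy : ∀ a ∈ I ^ n, a • y = 0)
    (hry : ∀ a ∈ I ^ n, a • (r • y) = 0) :
    torsionClass η n (r • y) hry = r • torsionClass η n y hy := by
  have : quotientHom n (r • y) hry = r • quotientHom n y hy := by
    apply quotientHom_ext
    change (1 : R) • (r • y) = r • ((1 : R) • y)
    exact smul_comm _ _ _
  rw [torsionClass, this]
  refine (congrArg ((extCocone I i M).ι.app (op (op n))) (map_smul _ _ _)).trans (map_smul _ _ _)

variable (I) in
/-- The map from the `I`-power torsion of `N` to local cohomology of `M` induced by a natural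
transformation `Hom(-, N) ⟶ Ext^i(-, M)`. -/
noncomputable def ofTorsion : torsionPowers I N →ₗ[R] (localCohomology I i).obj M where
  toFun y := torsionClass η y.2.choose y.1 y.2.choose_spec
  map_add' y z := by
    have hy : ∀ a ∈ I ^ (y.2.choose + z.2.choose), a • y.1 = 0 := fun a ha =>
      y.2.choose_spec a (Ideal.pow_le_pow_right (Nat.le_add_right _ _) ha)
    have hz : ∀ a ∈ I ^ (y.2.choose + z.2.choose), a • z.1 = 0 := fun a ha =>
      z.2.choose_spec a (Ideal.pow_le_pow_right (Nat.le_add_left _ _) ha)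
    rw [torsionClass_eq η y.1 _ hy, torsionClass_eq η z.1 _ hz, ← torsionClass_add η _ y.1 z.1 hy hz
      (fun a ha => by rw [smul_add, hy a ha, hz a ha, add_zero])]
    exact torsionClass_eq η _ _ _
  map_smul' r y := by
    rw [RingHom.id_apply, ← torsionClass_smul η _ r y.1 y.2.choose_spec
      (fun a ha => by rw [smul_comm, y.2.choose_spec a ha, smul_zero])]
    exact torsionClass_eq η _ _ _

lemma ofTorsion_surjective (hη : ∀ X, Function.Surjective (η.app X)) :
    Function.Surjective (ofTorsion I η) := by
  intro z
  obtain ⟨n, e, rfl⟩ := Concrete.isColimit_exists_rep _ (isColimitExtCocone I i M) z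
  obtain ⟨f, rfl⟩ := hη (op (ModuleCat.of R (R ⧸ I ^ n.unop.unop))) e
  have hy := fun a ha => smul_hom_mk_one (N := N) (n := n.unop.unop) (a := a) f ha
  refine ⟨⟨_, n.unop.unop, hy⟩, (torsionClass_eq η _ _ hy).trans ?_⟩
  have : quotientHom n.unop.unop _ hy = f := quotientHom_ext (one_smul R _)
  rw [torsionClass, this]

lemma ofTorsion_eq_zero_iff (y : torsionPowers I N) :
    ofTorsion I η y = 0 ↔ ∃ (m : ℕ) (hm : ∀ a ∈ I ^ m, a • y.1 = 0),
      η.app (op (ModuleCat.of R (R ⧸ I ^ m))) (quotientHom m y.1 hm) = 0 :=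
  torsionClass_eq_zero_iff η _ _ _

end

lemma ofTorsion_zero_bijective (I : Ideal R) (M : ModuleCat.{u} R) :
    Function.Bijective (ofTorsion I (homToExtFunctorZero M)) := by
  have hb := fun X => ConcreteCategory.bijective_of_isIso ((homToExtFunctorZero M).app X)
  refine ⟨(injective_iff_map_eq_zero _).2 fun y hy => ?_, ofTorsion_surjective _ fun X => (hb X).2⟩
  obtain ⟨m, hm, h⟩ := (ofTorsion_eq_zero_iff _ y).1 hy
  have h0 : quotientHom m y.1 hm = 0 := (hb _).1 (h.trans (map_zero _).symm)
  have := congrArg (fun f => f.hom (Ideal.Quotient.mk (I ^ m) 1)) h0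
  exact Subtype.ext ((one_smul R y.1).symm.trans this)

lemma ofTorsion_homδ_surjective {S : ShortComplex (ModuleCat.{u} R)} (hS : S.ShortExact)
    [Injective S.X₂] (I : Ideal R) : Function.Surjective (ofTorsion I (homδ hS)) :=
  ofTorsion_surjective _ (homδ_app_surjective hS)

lemma ofTorsion_homδ_eq_zero_iff {S : ShortComplex (ModuleCat.{u} R)} (hS : S.ShortExact)
    (I : Ideal R) (y : torsionPowers I S.X₃) :
    ofTorsion I (homδ hS) y = 0 ↔ ∃ e ∈ torsionPowers I S.X₂, S.g e = y.1 := by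
  rw [ofTorsion_eq_zero_iff]
  constructor
  · rintro ⟨m, hm, h⟩
    obtain ⟨g, hg⟩ := (homδ_app_eq_zero_iff hS _ _).1 h
    refine ⟨g (Ideal.Quotient.mk (I ^ m) 1), ⟨m, fun a ha => smul_hom_mk_one g ha⟩, ?_⟩
    exact (congrArg (fun f => f.hom (Ideal.Quotient.mk (I ^ m) 1)) hg).trans (one_smul R y.1)
  · rintro ⟨e, ⟨m, hm⟩, he⟩
    have hy : ∀ a ∈ I ^ m, a • y.1 = 0 := fun a ha => by
      rw [← he, ← map_smul, hm a ha, map_zero]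
    refine ⟨m, hy, (homδ_app_eq_zero_iff hS _ _).2 ⟨quotientHom m e hm, quotientHom_ext ?_⟩⟩
    change S.g ((1 : R) • e) = (1 : R) • y.1
    rw [one_smul, one_smul, he]

section QuasiDivisible

/-- Every element becomes divisible by `x` relative to some power of `x`. -/
def IsQuasiDivisible (x : R) (N : Type*) [AddCommGroup N] [Module R N] : Prop :=
  ∀ y : N, ∃ (l : ℕ) (z : N), x ^ l • y = x ^ (l + 1) • z

variable {x : R} {A B C : Type*} [AddCommGroup A] [Module R A] [AddCommGroup B] [Module R B]
  [AddCommGroup C] [Module R C]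

lemma IsQuasiDivisible.exists_pow_add (h : IsQuasiDivisible x A) (k : ℕ) (y : A) :
    ∃ (l : ℕ) (z : A), x ^ l • y = x ^ (l + k) • z := by
  induction k with
  | zero => exact ⟨0, y, rfl⟩
  | succ k ih =>
    obtain ⟨l, z, hz⟩ := ih
    obtain ⟨m, w, hw⟩ := h z
    refine ⟨m + l, w, ?_⟩
    rw [pow_add, mul_smul, hz, smul_comm, hw, smul_smul, ← pow_add]
    congr 2
    omega

lemma IsQuasiDivisible.of_exact (f : A →ₗ[R] B) (g : B →ₗ[R] C)
    (hfg : LinearMap.ker g ≤ LinearMap.range f) (hg : Function.Surjective g)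
    (hA : IsQuasiDivisible x A) (hC : IsQuasiDivisible x C) : IsQuasiDivisible x B := by
  intro y
  obtain ⟨l, z, hz⟩ := hC (g y)
  obtain ⟨z, rfl⟩ := hg z
  obtain ⟨a, ha⟩ : x ^ l • (y - x • z) ∈ LinearMap.range f := hfg <| by
    rw [LinearMap.mem_ker, map_smul, map_sub, map_smul, smul_sub, hz, smul_smul, ← pow_succ,
      sub_self]
  obtain ⟨m, w, hw⟩ := hA.exists_pow_add (l + 1) a
  refine ⟨m + l, z + f w, ?_⟩
  have h : x ^ m • (x ^ l • (y - x • z)) = x ^ (m + (l + 1)) • f w := by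
    rw [← ha, ← map_smul, ← map_smul, hw]
  rw [smul_smul, ← pow_add, smul_sub, smul_smul, ← pow_succ, sub_eq_iff_eq_add] at h
  rw [h, smul_add, add_comm, ← add_assoc m l 1]

lemma IsQuasiDivisible.of_bijective (f : A →ₗ[R] B) (hf : Function.Bijective f)
    (hB : IsQuasiDivisible x B) : IsQuasiDivisible x A := by
  intro y
  obtain ⟨l, z, hz⟩ := hB (f y)
  obtain ⟨z, rfl⟩ := hf.2 z
  exact ⟨l, z, hf.1 (by rw [map_smul, map_smul, hz])⟩

lemma isQuasiDivisible_of_isArtinian (x : R) (N : Type*) [AddCommGroup N] [Module R N]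
    [IsArtinian R N] : IsQuasiDivisible x N := by
  intro y
  obtain ⟨l, z, hz⟩ := IsArtinian.exists_pow_succ_smul_dvd x y
  exact ⟨l, z, hz.symm⟩

end QuasiDivisible

/-- The power torsion of an injective module over a Noetherian ring is quasi-divisible. -/
lemma isQuasiDivisible_torsionPowers [IsNoetherianRing R] (J : Ideal R) (x : R)
    (E : ModuleCat.{u} R) [Injective E] : IsQuasiDivisible x (torsionPowers J E) := by
  rintro ⟨e, n, he⟩
  let K : ℕ →o Ideal R :=
    ⟨fun k => Submodule.comap (LinearMap.mulLeft R (x ^ k)) (J ^ n), by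
      refine monotone_nat_of_le_succ fun k r hr => ?_
      change x ^ (k + 1) * r ∈ J ^ n
      rw [pow_succ', mul_assoc]
      exact Ideal.mul_mem_left _ _ hr⟩
  obtain ⟨k, hk⟩ := monotone_stabilizes_iff_noetherian.2 ‹IsNoetherianRing R› K
  let ψ : R →ₗ[R] R ⧸ J ^ n := (J ^ n).mkQ ∘ₗ LinearMap.mulLeft R (x ^ (k + 1))
  let φ : R →ₗ[R] E := LinearMap.toSpanSingleton R E (x ^ k • e)
  have hle : LinearMap.ker ψ ≤ LinearMap.ker φ := by
    intro r hr
    have h₁ : r ∈ K (k + 1) := (Submodule.Quotient.mk_eq_zero (J ^ n)).1 hr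
    rw [← hk (k + 1) (Nat.le_succ k)] at h₁
    change r • x ^ k • e = 0
    rw [smul_smul, mul_comm]
    exact he _ h₁
  let ψ' : R ⧸ LinearMap.ker ψ →ₗ[R] R ⧸ J ^ n := (LinearMap.ker ψ).liftQ ψ le_rfl
  have hψ' : Mono (ModuleCat.ofHom ψ') := by
    rw [ModuleCat.mono_iff_injective]
    exact LinearMap.ker_eq_bot.1 (Submodule.ker_liftQ_eq_bot _ _ _ le_rfl)
  let g : ModuleCat.of R (R ⧸ J ^ n) ⟶ E :=
    Injective.factorThru (ModuleCat.ofHom ((LinearMap.ker ψ).liftQ φ hle)) (ModuleCat.ofHom ψ')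
  have hg : g (ψ 1) = x ^ k • e :=
    (congrArg (fun f => f.hom (Submodule.Quotient.mk (1 : R))) (Injective.comp_factorThru
      (ModuleCat.ofHom ((LinearMap.ker ψ).liftQ φ hle)) (ModuleCat.ofHom ψ'))).trans
      (one_smul R _)
  refine ⟨k, ⟨g (Ideal.Quotient.mk (J ^ n) 1), n, fun a ha => smul_hom_mk_one g ha⟩,
    Subtype.ext ?_⟩
  change x ^ k • e = x ^ (k + 1) • g (Ideal.Quotient.mk (J ^ n) 1)
  rw [← hg, ← map_smul]
  rfl

lemma mem_torsionPowers_sup_span {J : Ideal R} {x : R} {N : Type*} [AddCommGroup N] [Module R N]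
    {y : N} : y ∈ torsionPowers (J ⊔ Ideal.span {x}) N ↔
      y ∈ torsionPowers J N ∧ ∃ k : ℕ, x ^ k • y = 0 := by
  constructor
  · rintro ⟨n, hn⟩
    exact ⟨⟨n, fun a ha => hn a (Ideal.pow_right_mono le_sup_left n ha)⟩, n,
      hn _ (Ideal.pow_mem_pow (Ideal.mem_sup_right (Ideal.mem_span_singleton_self x)) n)⟩
  · rintro ⟨⟨n, hn⟩, k, hk⟩
    refine ⟨n + k, fun a ha => ?_⟩
    obtain ⟨b, hb, c, hc, rfl⟩ := Submodule.mem_sup.1 (Ideal.sup_pow_add_le_pow_sup_pow ha)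
    rw [Ideal.span_singleton_pow, Ideal.mem_span_singleton'] at hc
    obtain ⟨r, rfl⟩ := hc
    rw [add_smul, hn b hb, mul_smul, hk, smul_zero, add_zero]

section

variable {S : ShortComplex (ModuleCat.{u} R)}

lemma subsingleton_one_iff (hS : S.ShortExact) [Injective S.X₂] (J : Ideal R) :
    Subsingleton ((localCohomology J 1).obj S.X₁) ↔
      ∀ y ∈ torsionPowers J S.X₃, ∃ e ∈ torsionPowers J S.X₂, S.g e = y := by
  constructor
  · intro h y hy
    exact (ofTorsion_homδ_eq_zero_iff hS J ⟨y, hy⟩).1 (Subsingleton.elim _ _)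
  · intro h
    refine subsingleton_of_forall_eq 0 fun z => ?_
    obtain ⟨y, rfl⟩ := ofTorsion_homδ_surjective hS J z
    exact (ofTorsion_homδ_eq_zero_iff hS J y).2 (h y.1 y.2)

lemma subsingleton_dimensionShift_iff (hS : S.ShortExact) [Injective S.X₂] (J : Ideal R) (i : ℕ) :
    Subsingleton ((localCohomology J (i + 1)).obj S.X₃) ↔
      Subsingleton ((localCohomology J (i + 2)).obj S.X₁) :=
  (dimensionShift hS J i).toLinearEquiv.toEquiv.subsingleton_congr

lemma subsingleton_one_sup_span (hS : S.ShortExact) [Injective S.X₂] {J : Ideal R} {x : R}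
    (h : Subsingleton ((localCohomology J 1).obj S.X₁))
    (hx : IsQuasiDivisible x (torsionPowers J S.X₁)) :
    Subsingleton ((localCohomology (J ⊔ Ideal.span {x}) 1).obj S.X₁) := by
  have hf : Function.Injective S.f := (ModuleCat.mono_iff_injective _).1 hS.mono_f
  rw [subsingleton_one_iff hS] at h ⊢
  intro y hy
  obtain ⟨hyJ, k, hk⟩ := mem_torsionPowers_sup_span.1 hy
  obtain ⟨e, heJ, rfl⟩ := h y hyJ
  obtain ⟨m, hm⟩ := (ShortComplex.moduleCat_exact_iff S).1 hS.exact (x ^ k • e)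
    (by rw [map_smul, hk])
  have hmJ : m ∈ torsionPowers J S.X₁ := by
    obtain ⟨n, hn⟩ := heJ
    refine ⟨n, fun a ha => hf ?_⟩
    rw [map_smul, hm, smul_comm, hn a ha, smul_zero, map_zero]
  obtain ⟨l, ⟨z, hzJ⟩, hz⟩ := hx.exists_pow_add k ⟨m, hmJ⟩
  have hz' : x ^ l • m = x ^ (l + k) • z := congrArg Subtype.val hz
  have hfz : S.f z ∈ torsionPowers J S.X₂ := by
    obtain ⟨n, hn⟩ := hzJ
    exact ⟨n, fun a ha => by rw [← map_smul, hn a ha, map_zero]⟩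
  refine ⟨e - S.f z, mem_torsionPowers_sup_span.2 ⟨sub_mem heJ hfz, l + k, ?_⟩, ?_⟩
  · rw [smul_sub, ← map_smul, ← hz', map_smul, hm, smul_smul, ← pow_add, sub_self]
  · rw [map_sub, ← ConcreteCategory.comp_apply S.f S.g, S.zero]
    exact sub_zero _

/-- If `H^1_J(M)` is quasi-divisible, so is the `J`-power torsion of the cokernel of an
embedding of `M` into an injective module. -/
lemma isQuasiDivisible_torsionPowers_X₃ [IsNoetherianRing R] (hS : S.ShortExact)
    [Injective S.X₂] {J : Ideal R} {x : R}
    (hx : IsQuasiDivisible x ((localCohomology J 1).obj S.X₁)) :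
    IsQuasiDivisible x (torsionPowers J S.X₃) := by
  have hg (e : S.X₂) (he : e ∈ torsionPowers J S.X₂) : S.g e ∈ torsionPowers J S.X₃ := by
    obtain ⟨n, hn⟩ := he
    exact ⟨n, fun a ha => by rw [← map_smul, hn a ha, map_zero]⟩
  refine IsQuasiDivisible.of_exact (S.g.hom.restrict hg) (ofTorsion J (homδ hS)) ?_
    (ofTorsion_homδ_surjective hS J) (isQuasiDivisible_torsionPowers J x S.X₂) hx
  intro y hy
  obtain ⟨e, he, hey⟩ := (ofTorsion_homδ_eq_zero_iff hS J y).1 hy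
  exact ⟨⟨e, he⟩, Subtype.ext hey⟩

end

/-- Every module embeds into an injective one, giving a short exact sequence. -/
lemma exists_shortExact_injective (M : ModuleCat.{u} R) :
    ∃ (E N : ModuleCat.{u} R) (f : M ⟶ E) (g : E ⟶ N) (w : f ≫ g = 0),
      Injective E ∧ (ShortComplex.mk f g w).ShortExact :=
  ⟨_, _, Injective.ι M, cokernel.π _, cokernel.condition _, inferInstance,
    { exact := ShortComplex.exact_cokernel _ }⟩

theorem subsingleton_succ_sup_span [IsNoetherianRing R] {J : Ideal R} {x : R} (i : ℕ)
    (M : ModuleCat.{u} R) (h : Subsingleton ((localCohomology J (i + 1)).obj M))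
    (hx : IsQuasiDivisible x ((localCohomology J i).obj M)) :
    Subsingleton ((localCohomology (J ⊔ Ideal.span {x}) (i + 1)).obj M) := by
  induction i generalizing M with
  | zero =>
    obtain ⟨E, N, f, g, w, hE, hS⟩ := exists_shortExact_injective M
    exact subsingleton_one_sup_span hS h (hx.of_bijective _ (ofTorsion_zero_bijective J M))
  | succ i ih =>
    obtain ⟨E, N, f, g, w, hE, hS⟩ := exists_shortExact_injective M
    rw [← subsingleton_dimensionShift_iff hS J i] at h
    refine (subsingleton_dimensionShift_iff hS _ i).1 ?_
    cases i with
    | zero =>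
      obtain ⟨E', N', f', g', w', hE', hS'⟩ := exists_shortExact_injective N
      exact subsingleton_one_sup_span hS' h (isQuasiDivisible_torsionPowers_X₃ hS hx)
    | succ i =>
      let e := (dimensionShift hS J i).toLinearEquiv
      exact ih N h (hx.of_bijective e.toLinearMap e.bijective)

lemma subsingleton_bot_succ (i : ℕ) (M : ModuleCat.{u} R) :
    Subsingleton ((localCohomology (⊥ : Ideal R) (i + 1)).obj M) := by
  induction i generalizing M with
  | zero =>
    obtain ⟨E, N, f, g, w, hE, hS⟩ := exists_shortExact_injective M
    refine (subsingleton_one_iff hS ⊥).2 fun y _ => ?_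
    obtain ⟨e, he⟩ := (ModuleCat.epi_iff_surjective _).1 hS.epi_g y
    refine ⟨e, ⟨1, fun a ha => ?_⟩, he⟩
    rw [pow_one, Ideal.mem_bot] at ha
    rw [ha, zero_smul]
  | succ i ih =>
    obtain ⟨E, N, f, g, w, hE, hS⟩ := exists_shortExact_injective M
    exact (subsingleton_dimensionShift_iff hS _ i).1 (ih N)

section

variable {I : Ideal R} {M : ModuleCat.{u} R}

lemma cohomologicalDimension_le_iff {c : ℕ} : cohomologicalDimension I M ≤ c ↔
    ∀ i, c < i → Subsingleton ((localCohomology I i).obj M) := by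
  rw [cohomologicalDimension, sSup_le_iff]
  constructor
  · intro h i hi
    by_contra hn
    rw [not_subsingleton_iff_nontrivial] at hn
    exact hi.not_ge (Nat.cast_le.1 (h _ ⟨i, rfl, hn⟩))
  · rintro h _ ⟨i, rfl, hi⟩
    by_contra hn
    exact not_subsingleton_iff_nontrivial.2 hi (h i (by simpa using hn))

lemma le_cohomologicalDimension {i : ℕ} (h : Nontrivial ((localCohomology I i).obj M)) :
    (i : ℕ∞) ≤ cohomologicalDimension I M :=
  le_sSup ⟨i, rfl, h⟩

/-- An ideal of cohomological dimension `c + 1` contains one of cohomological dimension `c`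
with non-Artinian top local cohomology. -/
lemma exists_lt_cohomologicalDimension_eq [IsNoetherianRing R] {c : ℕ}
    (hI : cohomologicalDimension I M = (c + 1 : ℕ)) :
    ∃ J < I, cohomologicalDimension J M = c ∧ ¬ IsArtinian R ((localCohomology J c).obj M) := by
  obtain ⟨J, ⟨hJI, hJ⟩, hmax⟩ := set_has_maximal_iff_noetherian.2 ‹IsNoetherianRing R›
    {J : Ideal R | J ≤ I ∧ cohomologicalDimension J M ≤ c} ⟨⊥, bot_le,
      cohomologicalDimension_le_iff.2 fun i hi => by
        obtain ⟨i, rfl⟩ := Nat.exists_eq_succ_of_ne_zero (Nat.ne_zero_of_lt hi)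
        exact subsingleton_bot_succ i M⟩
  have hJI' : J < I := by
    refine lt_of_le_of_ne hJI ?_
    rintro rfl
    rw [hI, Nat.cast_le] at hJ
    omega
  obtain ⟨x, hxI, hxJ⟩ := SetLike.exists_of_lt hJI'
  have hJ' := cohomologicalDimension_le_iff.1 hJ
  have hna : ¬ IsArtinian R ((localCohomology J c).obj M) := by
    intro hA
    refine hmax (J ⊔ Ideal.span {x}) ⟨sup_le hJI ((Ideal.span_singleton_le_iff_mem _).2 hxI),
      cohomologicalDimension_le_iff.2 fun i hi => ?_⟩
      (left_lt_sup.2 fun h => hxJ ((Ideal.span_singleton_le_iff_mem _).1 h))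
    obtain ⟨i, rfl⟩ := Nat.exists_eq_succ_of_ne_zero (Nat.ne_zero_of_lt hi)
    refine subsingleton_succ_sup_span i M (hJ' _ hi) ?_
    have : IsArtinian R ((localCohomology J i).obj M) := by
      rcases (Nat.lt_succ_iff.1 hi).eq_or_lt with rfl | h
      · exact hA
      · have := hJ' i h
        infer_instance
    exact isQuasiDivisible_of_isArtinian x _
  refine ⟨J, hJI', hJ.antisymm (le_cohomologicalDimension ?_), hna⟩
  rw [← not_subsingleton_iff_nontrivial]
  intro h
  exact hna inferInstance

end

theorem exists_chain [IsNoetherianRing R] (M : ModuleCat.{u} R) (c : ℕ) (I : Ideal R)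
    (hI : cohomologicalDimension I M = (c : ℕ∞)) :
    ∃ J : ℕ → Ideal R, J c = I ∧ (∀ i < c, J i < J (i + 1)) ∧
      (∀ i ≤ c, cohomologicalDimension (J i) M = (i : ℕ∞)) ∧
      ∀ i < c, ¬ IsArtinian R ((localCohomology (J i) i).obj M) := by
  induction c generalizing I with
  | zero =>
    refine ⟨fun _ => I, rfl, fun i hi => absurd hi i.not_lt_zero, fun i hi => ?_,
      fun i hi => absurd hi i.not_lt_zero⟩
    rwa [Nat.le_zero.1 hi]
  | succ c ih =>
    obtain ⟨I', hlt, hcd, hna⟩ := exists_lt_cohomologicalDimension_eq hI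
    obtain ⟨J, hJc, hJlt, hJcd, hJna⟩ := ih I' hcd
    have hJ' (i : ℕ) (hi : i ≤ c) : Function.update J (c + 1) I i = J i :=
      Function.update_of_ne (by omega) _ _
    refine ⟨Function.update J (c + 1) I, Function.update_self _ _ _, fun i hi => ?_,
      fun i hi => ?_, fun i hi => ?_⟩
    · rw [hJ' i (Nat.lt_succ_iff.1 hi)]
      rcases (Nat.lt_succ_iff.1 hi).eq_or_lt with rfl | h
      · rwa [Function.update_self, hJc]
      · rw [hJ' (i + 1) h]
        exact hJlt i h
    · rcases hi.eq_or_lt with rfl | h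
      · rwa [Function.update_self]
      · rw [hJ' i (Nat.lt_succ_iff.1 h)]
        exact hJcd i (Nat.lt_succ_iff.1 h)
    · rw [hJ' i (Nat.lt_succ_iff.1 hi)]
      rcases (Nat.lt_succ_iff.1 hi).eq_or_lt with rfl | h
      · rwa [hJc]
      · exact hJna i h

end localCohomology

end

/-- if `cd(I,M) = c > 0`, there is a descending chain of ideals
`I = I_c ⊋ I_{c-1} ⊋ ⋯ ⊋ I_0` with `cd(I_i, M) = i` for all `0 ≤ i ≤ c`, and moreover
`H^i_{I_i}(M)` is not Artinian for all `0 ≤ i ≤ c - 1`. -/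
theorem descending_chain_with_non_artinian_top_local_cohomology
    (R : Type u) [CommRing R] [IsNoetherianRing R] (I : Ideal R) (M : ModuleCat.{u} R)
    (c : ℕ) (hc : 0 < c) (hcd : cohomologicalDimension I M = (c : ℕ∞)) :
    ∃ J : ℕ → Ideal R, J c = I ∧ (∀ i < c, J i < J (i + 1)) ∧
      (∀ i ≤ c, cohomologicalDimension (J i) M = (i : ℕ∞)) ∧
      ∀ i < c, ¬ IsArtinian R ((localCohomology (J i) i).obj M) :=
  localCohomology.exists_chain M c I hcd
end

section
/- Let R be a commutative Noetherian ring with unity, M an R-module (not necessarily finitely generated), and I an ideal of R with dim(R/(I + Ann M)) = d, where Ann M is the annihilator of M. Let t ≥ 0 be an integer. If there exists an ideal J of R such that the local cohomology module H^{d+t}_{I+J}(M) is nonzero, then t ≤ cd(I,M). -/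
universe u

open CategoryTheory

/-- The submodule of elements annihilated by some power of the ideal `K`. -/
def Ideal.powerTorsion {R : Type*} [CommRing R] (K : Ideal R) (N : Type*) [AddCommGroup N]
    [Module R N] : Submodule R N where
  carrier := {z | ∃ n : ℕ, ∀ k ∈ K ^ n, k • z = 0}
  zero_mem' := ⟨0, fun _ _ ↦ smul_zero _⟩
  add_mem' := by
    rintro a b ⟨m, hm⟩ ⟨n, hn⟩
    refine ⟨m + n, fun k hk ↦ ?_⟩
    rw [smul_add, hm k (Ideal.pow_le_pow_right (Nat.le_add_right m n) hk),
      hn k (Ideal.pow_le_pow_right (Nat.le_add_left n m) hk), add_zero]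
  smul_mem' := by
    rintro c z ⟨n, hn⟩
    exact ⟨n, fun k hk ↦ by rw [smul_comm, hn k hk, smul_zero]⟩

namespace Ideal

variable {R : Type*} [CommRing R] {K L : Ideal R} {N N' : Type*} [AddCommGroup N] [Module R N]
  [AddCommGroup N'] [Module R N']

lemma mk_mem_powerTorsion (n : ℕ) (r : R) :
    Ideal.Quotient.mk (K ^ n) r ∈ K.powerTorsion (R ⧸ K ^ n) :=
  ⟨n, fun _ hk ↦ Ideal.Quotient.eq_zero_iff_mem.mpr (Ideal.mul_mem_right r _ hk)⟩

lemma map_mem_powerTorsion (f : N →ₗ[R] N') {z : N} (hz : z ∈ K.powerTorsion N) :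
    f z ∈ K.powerTorsion N' := by
  obtain ⟨n, hn⟩ := hz
  exact ⟨n, fun k hk ↦ by rw [← map_smul, hn k hk, map_zero]⟩

lemma powerTorsion_anti (h : K ≤ L) : L.powerTorsion N ≤ K.powerTorsion N := by
  rintro z ⟨n, hn⟩
  exact ⟨n, fun k hk ↦ hn k (Ideal.pow_right_mono h n hk)⟩

lemma mem_powerTorsion_sup_span_singleton {x : R} {z : N} :
    z ∈ (K ⊔ Ideal.span {x}).powerTorsion N ↔
      z ∈ K.powerTorsion N ∧ ∃ n : ℕ, x ^ n • z = 0 := by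
  constructor
  · intro hz
    refine ⟨powerTorsion_anti le_sup_left hz, ?_⟩
    obtain ⟨n, hn⟩ := hz
    exact ⟨n, hn _ (Ideal.pow_mem_pow (Ideal.mem_sup_right (Ideal.mem_span_singleton_self x)) n)⟩
  · rintro ⟨⟨m, hm⟩, n, hn⟩
    refine ⟨m + n, fun k hk ↦ ?_⟩
    obtain ⟨a, ha, b, hb, rfl⟩ := Submodule.mem_sup.mp (Ideal.sup_pow_add_le_pow_sup_pow hk)
    rw [Ideal.span_singleton_pow, Ideal.mem_span_singleton'] at hb
    obtain ⟨c, rfl⟩ := hb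
    rw [add_smul, hm a ha, mul_smul, hn, smul_zero, add_zero]

lemma exists_comap_quotientMk_eq {p : Ideal R} (hp : p.IsPrime) (h : K ≤ p) :
    ∃ P : PrimeSpectrum (R ⧸ K), P.asIdeal.comap (Ideal.Quotient.mk K) = p := by
  obtain ⟨P, hP⟩ : (⟨p, hp⟩ : PrimeSpectrum R) ∈
      Set.range (PrimeSpectrum.comap (Ideal.Quotient.mk K)) := by
    rw [range_comap_of_surjective _ _ Ideal.Quotient.mk_surjective, Ideal.mk_ker]
    exact h
  exact ⟨P, congrArg PrimeSpectrum.asIdeal hP⟩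

/-- Over a Noetherian ring, the `K`-power torsion of an injective module surjects onto its
localization away from any element `x`. -/
lemma exists_pow_smul_eq_pow_smul_of_baer [IsNoetherianRing R] (hN : Module.Baer R N) (x : R)
    (n : ℕ) {e : N} (he : e ∈ K.powerTorsion N) :
    ∃ f ∈ K.powerTorsion N, ∃ l : ℕ, x ^ (l + n) • f = x ^ l • e := by
  obtain ⟨m, hm⟩ := he
  let c : ℕ →o Ideal R :=
    ⟨fun l ↦ Submodule.comap (LinearMap.lsmul R R (x ^ l)) (K ^ m), by
      refine monotone_nat_of_le_succ fun l a ha ↦ ?_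
      simp only [Submodule.mem_comap, LinearMap.lsmul_apply, smul_eq_mul] at ha ⊢
      rw [pow_succ', mul_assoc]
      exact Ideal.mul_mem_left _ _ ha⟩
  obtain ⟨l, hl⟩ := monotone_stabilizes_iff_noetherian.mpr (inferInstance : IsNoetherian R R) c
  have key (a : R) (ha : x ^ (l + n) * a ∈ K ^ m) : x ^ l * a ∈ K ^ m := by
    have : a ∈ c l := by rw [hl (l + n) (Nat.le_add_right _ _)]; exact ha
    exact this
  let φ : R × (K ^ m : Ideal R) →ₗ[R] R :=
    (LinearMap.toSpanSingleton R R (x ^ (l + n))).coprod (K ^ m).subtype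
  let ψ : R × (K ^ m : Ideal R) →ₗ[R] N :=
    (LinearMap.toSpanSingleton R N (x ^ l • e)).comp (LinearMap.fst R R _)
  have hφψ : LinearMap.ker φ ≤ LinearMap.ker ψ := by
    rintro ⟨a, k⟩ h
    simp only [LinearMap.mem_ker, φ, ψ, LinearMap.coprod_apply,
      LinearMap.toSpanSingleton_apply, Submodule.subtype_apply, LinearMap.comp_apply,
      LinearMap.fst_apply, smul_eq_mul] at h ⊢
    rw [smul_smul, mul_comm]
    refine hm _ (key a ?_)
    rw [mul_comm, eq_neg_of_add_eq_zero_left h]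
    exact neg_mem k.2
  let g : LinearMap.range φ →ₗ[R] N :=
    ((LinearMap.ker φ).liftQ ψ hφψ).comp φ.quotKerEquivRange.symm.toLinearMap
  have hg (w : R × (K ^ m : Ideal R)) : g ⟨φ w, w, rfl⟩ = ψ w := by
    have : φ.quotKerEquivRange.symm ⟨φ w, w, rfl⟩ = Submodule.Quotient.mk w := by
      rw [LinearEquiv.symm_apply_eq]; rfl
    simp only [g, LinearMap.comp_apply, LinearEquiv.coe_coe]
    rw [this]
    rfl
  obtain ⟨G, hG⟩ := hN _ g
  have hG' (w : R × (K ^ m : Ideal R)) : φ w • G 1 = ψ w := by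
    rw [← hg w, ← hG _ ⟨w, rfl⟩, ← map_smul, smul_eq_mul, mul_one]
  refine ⟨G 1, ⟨m, fun k hk ↦ ?_⟩, l, ?_⟩
  · simpa [φ, ψ] using hG' (0, ⟨k, hk⟩)
  · simpa [φ, ψ] using hG' (1, 0)

end Ideal

namespace CochainComplex

variable {R : Type u} [CommRing R] (K L : Ideal R) (E : CochainComplex (ModuleCat.{u} R) ℕ)

/-- The cocycles of the subcomplex of `K`-power torsion elements of `E`. -/
def supportedCocycles (i : ℕ) : Submodule R (E.X i) :=
  K.powerTorsion (E.X i) ⊓ LinearMap.ker (E.d i (i + 1)).hom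

/-- The coboundaries of the subcomplex of `K`-power torsion elements of `E`. -/
noncomputable def supportedBoundaries (i : ℕ) : Submodule R (E.X i) :=
  (K.powerTorsion (E.X ((ComplexShape.up ℕ).prev i))).map (E.d _ i).hom

/-- The degree `i` cohomology of the `K`-power torsion of `E` vanishes after
localization at `p`. -/
def SupportedVanishesAt (i : ℕ) (p : Ideal R) : Prop :=
  ∀ z ∈ E.supportedCocycles K i, ∃ s ∉ p, s • z ∈ E.supportedBoundaries K i

variable {K L E}

lemma d_mem_supportedBoundaries {j i : ℕ} {y : E.X j} (hy : y ∈ K.powerTorsion (E.X j)) :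
    E.d j i y ∈ E.supportedBoundaries K i := by
  by_cases h : (ComplexShape.up ℕ).Rel j i
  · obtain rfl := (ComplexShape.up ℕ).prev_eq' h
    exact ⟨y, hy, rfl⟩
  · rw [E.shape _ _ h]
    exact zero_mem _

lemma mem_supportedBoundaries_succ {i : ℕ} {z : E.X (i + 1)} :
    z ∈ E.supportedBoundaries K (i + 1) ↔
      ∃ y ∈ K.powerTorsion (E.X i), E.d i (i + 1) y = z := by
  constructor
  · have h := CochainComplex.prev_nat_succ i
    unfold supportedBoundaries
    generalize (ComplexShape.up ℕ).prev (i + 1) = j at h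
    subst h
    rintro ⟨y, hy, rfl⟩
    exact ⟨y, hy, rfl⟩
  · rintro ⟨y, hy, rfl⟩
    exact d_mem_supportedBoundaries hy

lemma supportedVanishesAt_of_not_le {i : ℕ} {p : Ideal R} [p.IsPrime] (h : ¬ K ≤ p) :
    E.SupportedVanishesAt K i p := by
  obtain ⟨r, hrK, hrp⟩ := SetLike.not_le_iff_exists.mp h
  rintro z ⟨⟨n, hn⟩, -⟩
  refine ⟨r ^ n, fun hr ↦ hrp (‹p.IsPrime›.mem_of_pow_mem n hr), ?_⟩
  rw [hn _ (Ideal.pow_mem_pow hrK n)]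
  exact zero_mem _

lemma supportedVanishesAt_of_not_sup_le {I J a : Ideal R}
    (ha : ∀ (K : Ideal R) (i : ℕ), ∀ r ∈ a, ∀ z ∈ E.supportedCocycles K i,
      r • z ∈ E.supportedBoundaries K i) {i : ℕ} {p : Ideal R} [p.IsPrime] (h : ¬ I ⊔ a ≤ p) :
    E.SupportedVanishesAt (I ⊔ J) i p := by
  rcases not_and_or.mp (mt sup_le_iff.mpr h) with h | h
  · exact supportedVanishesAt_of_not_le fun h' ↦ h (le_sup_left.trans h')
  · obtain ⟨r, hra, hrp⟩ := SetLike.not_le_iff_exists.mp h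
    exact fun z hz ↦ ⟨r, hrp, ha _ _ r hra z hz⟩

lemma supportedCocycles_le_of_vanishesAt {i : ℕ}
    (h : ∀ p : Ideal R, p.IsPrime → E.SupportedVanishesAt K i p) :
    E.supportedCocycles K i ≤ E.supportedBoundaries K i := by
  intro z hz
  let a : Ideal R := (E.supportedBoundaries K i).comap (LinearMap.toSpanSingleton R _ z)
  have ha : a = ⊤ := by
    by_contra hne
    obtain ⟨p, hp, hap⟩ := Ideal.exists_le_maximal a hne
    obtain ⟨s, hs, hsz⟩ := h p hp.isPrime z hz
    exact hs (hap hsz)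
  simpa [a] using (Ideal.eq_top_iff_one a).mp ha

/-- If the cohomology of the `K`-power torsion vanishes at `p` in degree `j + 1` and, after
inverting `x`, also in degree `j`, then the cohomology of the `K ⊔ (x)`-power torsion vanishes
at `p` in degree `j + 1`. -/
lemma SupportedVanishesAt.sup_span_singleton [IsNoetherianRing R]
    (hE : ∀ i, Module.Baer R (E.X i)) {j : ℕ} {p : Ideal R} [p.IsPrime] {x : R}
    (h : E.SupportedVanishesAt K (j + 1) p)
    (hx : ∀ q : Ideal R, q.IsPrime → q ≤ p → x ∉ q → E.SupportedVanishesAt K j q) :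
    E.SupportedVanishesAt (K ⊔ Ideal.span {x}) (j + 1) p := by
  rintro z ⟨hz, hdz⟩
  obtain ⟨hzK, n, hn⟩ := Ideal.mem_powerTorsion_sup_span_singleton.mp hz
  obtain ⟨s, hs, hsz⟩ := h z ⟨hzK, hdz⟩
  obtain ⟨y, hy, hyz⟩ := mem_supportedBoundaries_succ.mp hsz
  have hc : x ^ n • y ∈ E.supportedCocycles K j := by
    refine ⟨Submodule.smul_mem _ _ hy, ?_⟩
    rw [SetLike.mem_coe, LinearMap.mem_ker, map_smul, hyz, smul_comm, hn, smul_zero]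
  let a : Ideal R :=
    (E.supportedBoundaries K j).comap (LinearMap.toSpanSingleton R _ (x ^ n • y))
  have ha : ¬ Disjoint (a : Set R) (Submonoid.powers x ⊔ p.primeCompl : Submonoid R) := by
    intro hd
    obtain ⟨q, hq, haq, hqd⟩ := Ideal.exists_le_prime_disjoint a _ hd
    have hqp : q ≤ p := fun r hr ↦ by
      by_contra hrp
      exact Set.disjoint_left.mp hqd hr
        ((le_sup_right : _ ≤ Submonoid.powers x ⊔ p.primeCompl) hrp)
    have hxq : x ∉ q := fun hr ↦ Set.disjoint_left.mp hqd hr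
      ((le_sup_left : _ ≤ Submonoid.powers x ⊔ p.primeCompl) (Submonoid.mem_powers x))
    obtain ⟨r, hr, hrc⟩ := hx q hq hqp hxq _ hc
    exact hr (haq hrc)
  obtain ⟨r, hra, hrS⟩ := Set.not_disjoint_iff.mp ha
  obtain ⟨_, ⟨N, rfl⟩, s', hs', rfl⟩ := Submonoid.mem_sup.mp hrS
  obtain ⟨u, hu, hdu⟩ : (x ^ N * s') • x ^ n • y ∈ E.supportedBoundaries K j := hra
  obtain ⟨f, hf, l, hfu⟩ := Ideal.exists_pow_smul_eq_pow_smul_of_baer (hE _) x (N + n) hu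
  refine ⟨s' * s, p.primeCompl.mul_mem hs' hs, mem_supportedBoundaries_succ.mpr
    ⟨s' • y - (E.d _ j).hom f, Ideal.mem_powerTorsion_sup_span_singleton.mpr
      ⟨sub_mem (Submodule.smul_mem _ _ hy) (Ideal.map_mem_powerTorsion _ hf),
        l + (N + n), ?_⟩, ?_⟩⟩
  · rw [smul_sub, ← map_smul, hfu, map_smul, hdu, sub_eq_zero]
    simp only [smul_smul]
    ring_nf
  · have : (E.d j (j + 1)).hom ((E.d ((ComplexShape.up ℕ).prev j) j).hom f) = 0 := by
      rw [← LinearMap.comp_apply, ← ModuleCat.hom_comp, E.d_comp_d]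
      rfl
    rw [map_sub, this, sub_zero, map_smul, hyz, smul_smul]

/-- If the `I`-power torsion of a complex `E` of injective modules is acyclic in degrees at
least `t`, and `a` annihilates its supported cohomology, then the `I ⊔ J`-power torsion is
acyclic in degrees at least `n + t` at every prime of height at most `n` in `V(I ⊔ a)`. -/
lemma supportedVanishesAt_of_height_le [IsNoetherianRing R]
    (hE : ∀ i, Module.Baer R (E.X i)) {I a : Ideal R} {t : ℕ}
    (ht : 0 < t)
    (hI : ∀ i, t ≤ i → E.supportedCocycles I i ≤ E.supportedBoundaries I i)
    (ha : ∀ (K : Ideal R) (i : ℕ), ∀ r ∈ a, ∀ z ∈ E.supportedCocycles K i,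
      r • z ∈ E.supportedBoundaries K i) (n : ℕ) :
    ∀ P : PrimeSpectrum (R ⧸ (I ⊔ a)), Order.height P ≤ n → ∀ (J : Ideal R) (i : ℕ), n + t ≤ i →
      E.SupportedVanishesAt (I ⊔ J) i (P.asIdeal.comap (Ideal.Quotient.mk (I ⊔ a))) := by
  induction n using Nat.strong_induction_on with
  | _ n ih =>
  intro P hP J i hi
  set p : Ideal R := P.asIdeal.comap (Ideal.Quotient.mk (I ⊔ a))
  obtain ⟨S, rfl⟩ := IsNoetherian.noetherian J
  classical
  induction S using Finset.induction_on with
  | empty =>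
    intro z hz
    simp only [Finset.coe_empty, Submodule.span_empty, sup_bot_eq] at hz ⊢
    exact ⟨1, (Ideal.ne_top_iff_one p).mp (inferInstance : p.IsPrime).ne_top,
      by simpa using hI i (by lia) hz⟩
  | insert x S _ hS =>
    obtain ⟨j, rfl⟩ : ∃ j, i = j + 1 := ⟨i - 1, by lia⟩
    rw [Finset.coe_insert, Submodule.span_insert, sup_comm (Submodule.span R {x}), ← sup_assoc]
    by_cases hxp : x ∈ p
    · refine SupportedVanishesAt.sup_span_singleton hE hS fun q hq hqp hxq ↦ ?_
      by_cases hIq : I ⊔ a ≤ q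
      · obtain ⟨Q, rfl⟩ := Ideal.exists_comap_quotientMk_eq hq hIq
        have hQP : Q < P := by
          refine lt_of_le_of_ne ?_ ?_
          · exact (Ideal.comap_le_comap_iff_of_surjective _
              Ideal.Quotient.mk_surjective _ _).mp hqp
          · rintro rfl
            exact hxq hxp
        have hlt : Order.height Q < n :=
          (Order.height_strictMono hQP ((Order.height_mono hQP.le).trans hP |>.trans_lt
            (ENat.natCast_lt_top n))).trans_le hP
        obtain ⟨m, hm⟩ := ENat.ne_top_iff_exists.mp hlt.ne_top
        rw [← hm, Nat.cast_lt] at hlt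
        exact ih m hlt Q hm.ge _ j (by lia)
      · exact supportedVanishesAt_of_not_sup_le ha hIq
    · exact supportedVanishesAt_of_not_le fun h ↦
        hxp (h (Ideal.mem_sup_right (Ideal.mem_span_singleton_self x)))

end CochainComplex

namespace CategoryTheory.ProjectiveResolution

variable {R : Type u} [CommRing R] {X X' : ModuleCat.{u} R}

/-- Precomposition with a morphism of chain complexes. -/
noncomputable def _root_.ChainComplex.linearYonedaObjMap_s4
    {K L : ChainComplex (ModuleCat.{u} R) ℕ} (φ : K ⟶ L) (Y : ModuleCat.{u} R) :
    L.linearYonedaObj R Y ⟶ K.linearYonedaObj R Y :=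
  (HomologicalComplex.unopFunctor _ _).map
    ((((linearYoneda R (ModuleCat.{u} R)).obj Y).rightOp.mapHomologicalComplex _).map φ).op

lemma _root_.HomologicalComplex.homologyUnop_inv_naturality {V ι : Type*} [Category V]
    [Abelian V] {c : ComplexShape ι} {K L : HomologicalComplex Vᵒᵖ c} (φ : K ⟶ L) (i : ι) :
    (HomologicalComplex.homologyMap φ i).unop ≫ (K.homologyUnop i).inv =
      (L.homologyUnop i).inv ≫
        HomologicalComplex.homologyMap ((HomologicalComplex.unopFunctor V c).map φ.op) i := by
  have h := HomologicalComplex.homologyOp_hom_naturality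
    ((HomologicalComplex.unopFunctor V c).map φ.op) i
  exact (Iso.comp_inv_eq (K.homologyUnop i)).mpr
    (((Iso.eq_inv_comp (L.homologyUnop i)).mpr (congrArg Quiver.Hom.unop h)).trans
      (Category.assoc _ _ _).symm)

lemma isoExt_hom_naturality_s4 (P : ProjectiveResolution X) (P' : ProjectiveResolution X')
    (g : X' ⟶ X) (φ : P'.complex ⟶ P.complex) (comm : φ.f 0 ≫ P.π.f 0 = P'.π.f 0 ≫ g) (n : ℕ)
    (Y : ModuleCat.{u} R) :
    ((Ext R (ModuleCat.{u} R) n).map g.op).app Y ≫ (P'.isoExt n Y).hom =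
      (P.isoExt n Y).hom ≫
        HomologicalComplex.homologyMap (ChainComplex.linearYonedaObjMap_s4 φ Y) n := by
  have h := congrArg Quiver.Hom.unop (P'.isoLeftDerivedObj_inv_naturality g P φ comm
    ((linearYoneda R (ModuleCat.{u} R)).obj Y).rightOp n)
  have h' := HomologicalComplex.homologyUnop_inv_naturality
    ((((linearYoneda R (ModuleCat.{u} R)).obj Y).rightOp.mapHomologicalComplex _).map φ) n
  change ((((linearYoneda R (ModuleCat R)).obj Y).rightOp.leftDerived n).map g).unop ≫
    ((P'.isoLeftDerivedObj _ n).inv.unop ≫ (HomologicalComplex.homologyUnop _ n).inv) =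
    ((P.isoLeftDerivedObj _ n).inv.unop ≫ (HomologicalComplex.homologyUnop _ n).inv) ≫ _
  rw [unop_comp, unop_comp] at h
  exact (Category.assoc _ _ _).symm.trans ((congrArg (· ≫ _) h).trans
    ((Category.assoc _ _ _).trans ((congrArg (_ ≫ ·) h').trans (Category.assoc _ _ _).symm)))

variable (P : ProjectiveResolution X) {Y : ModuleCat.{u} R} {n : ℕ}

/-- The cocycle `f` represents the class `e`. -/
def Represents (e : ((Ext R (ModuleCat.{u} R) n).obj (.op X)).obj Y) (f : P.complex.X n ⟶ Y) :
    Prop :=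
  ∃ c : (P.complex.linearYonedaObj R Y).cycles n,
    (P.complex.linearYonedaObj R Y).iCycles n c = f ∧
      (P.complex.linearYonedaObj R Y).homologyπ n c = (P.isoExt n Y).hom e

variable {P}

lemma Represents.d_comp {e : ((Ext R (ModuleCat.{u} R) n).obj (.op X)).obj Y}
    {f : P.complex.X n ⟶ Y} (h : P.Represents e f) : P.complex.d (n + 1) n ≫ f = 0 := by
  obtain ⟨c, rfl, -⟩ := h
  exact congr($((P.complex.linearYonedaObj R Y).iCycles_d n (n + 1)) c)

variable (P) in
lemma exists_represents (e : ((Ext R (ModuleCat.{u} R) n).obj (.op X)).obj Y) :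
    ∃ f, P.Represents e f := by
  obtain ⟨c, hc⟩ := (ModuleCat.epi_iff_surjective
    ((P.complex.linearYonedaObj R Y).homologyπ n)).mp inferInstance ((P.isoExt n Y).hom e)
  exact ⟨_, c, rfl, hc⟩

lemma exists_represents_of_d_comp (f : P.complex.X n ⟶ Y) (hf : P.complex.d (n + 1) n ≫ f = 0) :
    ∃ e : ((Ext R (ModuleCat.{u} R) n).obj (.op X)).obj Y, P.Represents e f := by
  let c := (P.complex.linearYonedaObj R Y).cyclesMk f (n + 1) (by simp) hf
  refine ⟨(P.isoExt n Y).inv ((P.complex.linearYonedaObj R Y).homologyπ n c), c,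
    (P.complex.linearYonedaObj R Y).i_cyclesMk f (n + 1) (by simp) hf, ?_⟩
  simp

lemma Represents.eq_zero_iff {e : ((Ext R (ModuleCat.{u} R) (n + 1)).obj (.op X)).obj Y}
    {f : P.complex.X (n + 1) ⟶ Y} (h : P.Represents e f) :
    e = 0 ↔ ∃ g : P.complex.X n ⟶ Y, P.complex.d (n + 1) n ≫ g = f := by
  obtain ⟨c, rfl, hc⟩ := h
  set L := P.complex.linearYonedaObj R Y
  have h0 : e = 0 ↔ L.homologyπ (n + 1) c = 0 := by
    rw [hc]
    exact (map_eq_zero_iff _ ((ModuleCat.mono_iff_injective _).mp inferInstance)).symm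
  have hex := (ShortComplex.moduleCat_exact_iff _).mp
    (ShortComplex.exact_of_g_is_cokernel (ShortComplex.mk _ _ (L.toCycles_comp_homologyπ n (n + 1)))
      (L.homologyIsCokernel n (n + 1) (by simp)))
  rw [h0]
  constructor
  · intro h
    obtain ⟨g, rfl⟩ := hex c h
    exact ⟨g, congr($(L.toCycles_i n (n + 1)) g).symm⟩
  · rintro ⟨g, hg⟩
    have : c = L.toCycles n (n + 1) g :=
      (ModuleCat.mono_iff_injective (L.iCycles (n + 1))).mp inferInstance
        (hg.symm.trans congr($(L.toCycles_i n (n + 1)) g).symm)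
    rw [this]
    exact congr($(L.toCycles_comp_homologyπ n (n + 1)) g)

lemma Represents.map {e : ((Ext R (ModuleCat.{u} R) n).obj (.op X)).obj Y}
    {f : P.complex.X n ⟶ Y} (h : P.Represents e f) {P' : ProjectiveResolution X'} {g : X' ⟶ X}
    (φ : P'.Hom P g) :
    P'.Represents (((Ext R (ModuleCat.{u} R) n).map g.op).app Y e) (φ.hom.f n ≫ f) := by
  obtain ⟨c, rfl, hc⟩ := h
  refine ⟨HomologicalComplex.cyclesMap (ChainComplex.linearYonedaObjMap_s4 φ.hom Y) n c,
    congr($(HomologicalComplex.cyclesMap_i (ChainComplex.linearYonedaObjMap_s4 φ.hom Y) n) c), ?_⟩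
  have h1 := congr($(HomologicalComplex.homologyπ_naturality
    (ChainComplex.linearYonedaObjMap_s4 φ.hom Y) n) c)
  have h2 := congr($(isoExt_hom_naturality_s4 P P' g φ.hom φ.hom_f_zero_comp_π_f_zero n Y) e)
  simp only [ModuleCat.hom_comp, LinearMap.comp_apply] at h1 h2
  rw [hc] at h1
  exact h1.symm.trans h2.symm

end CategoryTheory.ProjectiveResolution


namespace CategoryTheory.InjectiveResolution

open Limits

variable {R : Type u} [CommRing R] {X X' Y : ModuleCat.{u} R} {n : ℕ}

/-- The cocycle `f` with values in an injective resolution represents the class `e`. -/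
def Represents (E : InjectiveResolution Y)
    (e : ((Ext R (ModuleCat.{u} R) n).obj (.op X)).obj Y) (f : X ⟶ E.cocomplex.X n) : Prop :=
  ∃ (hf : f ≫ E.cocomplex.d n (n + 1) = 0) (P : ProjectiveResolution X) (h : P.complex.X n ⟶ Y)
    (he : P.Represents e h),
    P.extMk h (n + 1) rfl he.d_comp = E.extMk f (n + 1) rfl hf

lemma exists_represents (E : InjectiveResolution Y)
    (e : ((Ext R (ModuleCat.{u} R) n).obj (.op X)).obj Y) : ∃ f, E.Represents e f := by
  let P := projectiveResolution X
  obtain ⟨h, he⟩ := P.exists_represents e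
  obtain ⟨f, hf, hfh⟩ := E.extMk_surjective (P.extMk h (n + 1) rfl he.d_comp) (n + 1) rfl
  exact ⟨f, hf, P, h, he, hfh.symm⟩

variable {E : InjectiveResolution Y}

lemma exists_represents_of_comp_d (f : X ⟶ E.cocomplex.X n)
    (hf : f ≫ E.cocomplex.d n (n + 1) = 0) :
    ∃ e : ((Ext R (ModuleCat.{u} R) n).obj (.op X)).obj Y, E.Represents e f := by
  let P := projectiveResolution X
  obtain ⟨h, hh, hfh⟩ := P.extMk_surjective (E.extMk f (n + 1) rfl hf) (n + 1) rfl
  obtain ⟨e, he⟩ := ProjectiveResolution.exists_represents_of_d_comp h hh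
  exact ⟨e, hf, P, h, he, hfh⟩

lemma Represents.comp_d {e : ((Ext R (ModuleCat.{u} R) n).obj (.op X)).obj Y}
    {f : X ⟶ E.cocomplex.X n} (h : E.Represents e f) : f ≫ E.cocomplex.d n (n + 1) = 0 := h.1

lemma Represents.eq_zero_iff {e : ((Ext R (ModuleCat.{u} R) (n + 1)).obj (.op X)).obj Y}
    {f : X ⟶ E.cocomplex.X (n + 1)} (h : E.Represents e f) :
    e = 0 ↔ ∃ g : X ⟶ E.cocomplex.X n, g ≫ E.cocomplex.d n (n + 1) = f := by
  obtain ⟨hf, P, h, he, heq⟩ := h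
  rw [he.eq_zero_iff, ← P.extMk_eq_zero_iff h _ rfl he.d_comp n rfl, heq,
    E.extMk_eq_zero_iff f _ rfl hf n rfl]

lemma Represents.map {e : ((Ext R (ModuleCat.{u} R) n).obj (.op X)).obj Y}
    {f : X ⟶ E.cocomplex.X n} (h : E.Represents e f) (g : X' ⟶ X) :
    E.Represents (((Ext R (ModuleCat.{u} R) n).map g.op).app Y e) (g ≫ f) := by
  obtain ⟨hf, P, h, he, heq⟩ := h
  let P' := projectiveResolution X'
  let φ : P'.Hom P g := ⟨ProjectiveResolution.lift g P' P,
    ProjectiveResolution.lift_commutes_zero g P' P⟩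
  refine ⟨by rw [Category.assoc, hf, comp_zero], P', _, he.map φ, ?_⟩
  rw [← E.mk₀_comp_extMk f _ rfl hf g, ← heq, ProjectiveResolution.mk₀_comp_extMk h _ rfl _ φ]

end CategoryTheory.InjectiveResolution

namespace localCohomology

open Limits

variable {R : Type u} [CommRing R] {K : Ideal R} {M : ModuleCat.{u} R}

/-- The projection `R ⧸ K ^ n ⟶ R ⧸ K ^ m` for `m ≤ n`. -/
noncomputable def quotientPowMap (K : Ideal R) {m n : ℕ} (h : m ≤ n) :
    ModuleCat.of R (R ⧸ K ^ n) ⟶ ModuleCat.of R (R ⧸ K ^ m) :=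
  (ringModIdeals (idealPowersDiagram K)).map (homOfLE h).op

lemma subsingleton_obj_iff {i : ℕ} :
    Subsingleton ((localCohomology K i).obj M) ↔
      ∀ (m : ℕ) (e : ((Ext R (ModuleCat.{u} R) i).obj (.op (.of R (R ⧸ K ^ m)))).obj M),
        ∃ (n : ℕ) (h : m ≤ n),
          ((Ext R (ModuleCat.{u} R) i).map (quotientPowMap K h).op).app M e = 0 := by
  let D := diagram (idealPowersDiagram K) i
  have : HasColimit D := hasColimitDiagram (idealPowersDiagram K) i
  have := preservesSmallestFilteredColimits_of_preservesFilteredColimits (forget (ModuleCat.{u} R))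
  have := PreservesFilteredColimitsOfSize.preserves_filtered_colimits
    (F := forget (ModuleCat.{u} R)) ((ℕᵒᵖ)ᵒᵖ)
  let F := D ⋙ (evaluation _ _).obj M
  have iso : (localCohomology K i).obj M ≅ colimit F := colimitObjIsoColimitCompEvaluation D M
  have hiso : Subsingleton ((localCohomology K i).obj M) ↔ Subsingleton (colimit F : ModuleCat R) :=
    iso.toLinearEquiv.toEquiv.subsingleton_congr
  rw [hiso]
  constructor
  · intro h m e
    have h0 : colimit.ι F (.op (.op m)) e = colimit.ι F (.op (.op m)) 0 := Subsingleton.elim _ _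
    obtain ⟨k, f, g, hfg⟩ := (Concrete.colimit_rep_eq_iff_exists F _ _).mp h0
    refine ⟨k.unop.unop, leOfHom f.unop.unop, ?_⟩
    rw [map_zero] at hfg
    exact hfg
  · intro h
    refine ⟨fun a b ↦ ?_⟩
    have (a : (colimit F : ModuleCat R)) : a = 0 := by
      obtain ⟨m, e, rfl⟩ := Concrete.colimit_exists_rep F a
      obtain ⟨n, hmn, hn⟩ := h m.unop.unop e
      have hw := congr($(colimit.w F (homOfLE hmn).op.op) e)
      refine hw.symm.trans ?_
      exact (congrArg (colimit.ι F (.op (.op n))) hn).trans (map_zero _)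
    rw [this a, this b]

end localCohomology

namespace CategoryTheory.InjectiveResolution

open CochainComplex localCohomology

variable {R : Type u} [CommRing R] {M : ModuleCat.{u} R} (E : InjectiveResolution M)

lemma baer_cocomplex_X (i : ℕ) : Module.Baer R (E.cocomplex.X i) :=
  have : Injective (ModuleCat.of R (E.cocomplex.X i)) := E.injective i
  Module.Baer.of_injective (Module.injective_module_of_injective_object R _)

lemma smul_mem_supportedBoundaries (K : Ideal R) (i : ℕ) {r : R}
    (hr : r ∈ Module.annihilator R M) {z : E.cocomplex.X i}
    (hz : z ∈ E.cocomplex.supportedCocycles K i) :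
    r • z ∈ E.cocomplex.supportedBoundaries K i := by
  have hcomm : E.ι ≫ (r • 𝟙 E.cocomplex) = 0 := by
    ext m
    exact (map_smul (E.ι.f 0).hom r m).symm.trans
      ((congrArg (E.ι.f 0) (Module.mem_annihilator.mp hr m)).trans (map_zero _))
  let H := descHomotopyZero _ hcomm
  have h := congr($(H.comm i) z)
  rw [dNext_eq _ (show (ComplexShape.up ℕ).Rel i (i + 1) from rfl)] at h
  have hd : E.cocomplex.d i (i + 1) z = 0 := hz.2
  have hr : r • z = E.cocomplex.d _ i (H.hom i ((ComplexShape.up ℕ).prev i) z) := by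
    refine h.trans ?_
    change H.hom (i + 1) i (E.cocomplex.d i (i + 1) z) + _ + 0 = _
    rw [hd, map_zero, zero_add, add_zero]
    rfl
  rw [hr]
  exact d_mem_supportedBoundaries (Ideal.map_mem_powerTorsion _ hz.1)

/-- In positive degrees, local cohomology with support in `K` vanishes if and only if the
`K`-power torsion of an injective resolution is acyclic. -/
lemma subsingleton_localCohomology_iff (K : Ideal R) (i : ℕ) :
    Subsingleton ((localCohomology K (i + 1)).obj M) ↔
      E.cocomplex.supportedCocycles K (i + 1) ≤ E.cocomplex.supportedBoundaries K (i + 1) := by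
  rw [subsingleton_obj_iff]
  constructor
  · rintro h z ⟨⟨m, hm⟩, hz⟩
    let f : ModuleCat.of R (R ⧸ K ^ m) ⟶ E.cocomplex.X (i + 1) :=
      ModuleCat.ofHom (Submodule.liftQ (K ^ m) (LinearMap.toSpanSingleton R _ z) hm)
    have hf : f ≫ E.cocomplex.d (i + 1) (i + 1 + 1) = 0 := by
      ext
      exact (congrArg _ (one_smul R z)).trans hz
    obtain ⟨e, he⟩ := exists_represents_of_comp_d f hf
    obtain ⟨n, hmn, hn⟩ := h m e
    obtain ⟨g, hg⟩ := (he.map (quotientPowMap K hmn)).eq_zero_iff.mp hn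
    refine mem_supportedBoundaries_succ.mpr ⟨g (Ideal.Quotient.mk _ 1), ?_, ?_⟩
    · exact Ideal.map_mem_powerTorsion g.hom (Ideal.mk_mem_powerTorsion n 1)
    · exact congr($hg (Ideal.Quotient.mk _ 1)).trans (one_smul R z)
  · intro h m e
    obtain ⟨f, hf⟩ := E.exists_represents e
    obtain ⟨y, ⟨n, hn⟩, hyf⟩ := mem_supportedBoundaries_succ.mp
      (h (x := f (Ideal.Quotient.mk _ 1))
        ⟨Ideal.map_mem_powerTorsion f.hom (Ideal.mk_mem_powerTorsion m 1),
          congr($hf.comp_d (Ideal.Quotient.mk _ 1))⟩)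
    refine ⟨max m n, le_max_left _ _, (hf.map _).eq_zero_iff.mpr ⟨ModuleCat.ofHom
      (Submodule.liftQ (K ^ (max m n)) (LinearMap.toSpanSingleton R _ y)
        fun k hk ↦ hn k (Ideal.pow_le_pow_right (le_max_right _ _) hk)), ?_⟩⟩
    ext
    exact (congrArg _ (one_smul R y)).trans hyf

end CategoryTheory.InjectiveResolution

/-- if `dim (R/(I + Ann M)) = d` and `H^{d+t}_{I+J}(M) ≠ 0` for some ideal `J`,
then `t ≤ cd(I,M)`. -/
theorem le_cohomologicalDimension_of_nontrivial_localCohomology_sum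
    (R : Type u) [CommRing R] [IsNoetherianRing R] (I : Ideal R) (M : ModuleCat.{u} R)
    (d t : ℕ) (hd : ringKrullDim (R ⧸ (I + Module.annihilator R M)) = (d : WithBot ℕ∞))
    (J : Ideal R) (hJ : Nontrivial ((localCohomology (I + J) (d + t)).obj M)) :
    (t : ℕ∞) ≤ cohomologicalDimension I M := by
  by_contra hlt
  let E := injectiveResolution M
  have ht : 0 < t := Nat.pos_of_ne_zero fun h ↦ hlt (by simp [h])
  have hI (i : ℕ) (hi : t ≤ i) :
      E.cocomplex.supportedCocycles I i ≤ E.cocomplex.supportedBoundaries I i := by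
    obtain ⟨i, rfl⟩ := Nat.exists_eq_succ_of_ne_zero (ht.trans_le hi).ne'
    rw [← E.subsingleton_localCohomology_iff, ← not_nontrivial_iff_subsingleton]
    exact fun h ↦ hlt ((Nat.cast_le.mpr hi).trans (le_sSup ⟨_, rfl, h⟩))
  have hann (K : Ideal R) (i : ℕ) (r : R) (hr : r ∈ Module.annihilator R M) z hz :=
    E.smul_mem_supportedBoundaries K i hr (z := z) hz
  obtain ⟨k, hk⟩ := Nat.exists_eq_succ_of_ne_zero (ht.trans_le (Nat.le_add_left t d)).ne'
  rw [hk, ← not_subsingleton_iff_nontrivial, E.subsingleton_localCohomology_iff] at hJ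
  refine hJ (CochainComplex.supportedCocycles_le_of_vanishesAt fun p hp ↦ ?_)
  by_cases hIp : I ⊔ Module.annihilator R M ≤ p
  · obtain ⟨P, rfl⟩ := Ideal.exists_comap_quotientMk_eq hp hIp
    refine CochainComplex.supportedVanishesAt_of_height_le E.baer_cocomplex_X ht hI hann d P ?_ J _
      hk.le
    exact WithBot.coe_le_coe.mp ((Order.height_le_krullDim P).trans hd.le)
  · exact CochainComplex.supportedVanishesAt_of_not_sup_le hann hIp
end
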